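/- arXiv:1711.07409 — 2 statements merged into one kernel-verified Lean document; each statement's English description precedes it below -/
import Mathlib

section
/- Let X be a cyclic finite-dimensional smooth T-module such that 𝔼[X] is perfect of degree one, let i : P → M and j : 𝔼[X] → M be injective TS-morphisms between TS-modules of finite length, and let p : M → Q = M/i(P) be the quotient map. Then either φ = p∘j is injective and i induces an injection of P into M/j(𝔼[X]), or there exists a T-morphism ψ : X → κ(Q) = Q^S and an injective TS-morphism 𝔼[Y] → P, where Y = ker(ψ). -/
noncomputable section

open scoped Classical

namespace PSW

/-! ### The affine group `λ.b : x ↦ λ·x + b` over a field `K`. -/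

@[ext]
structure Aff (K : Type*) [Field K] where
  t : Kˣ
  s : K

namespace Aff

variable {K : Type*} [Field K]

instance : Mul (Aff K) := ⟨fun g h => ⟨g.t * h.t, g.s + (g.t : K) * h.s⟩⟩
instance : One (Aff K) := ⟨⟨1, 0⟩⟩
instance : Inv (Aff K) := ⟨fun g => ⟨g.t⁻¹, -(((g.t⁻¹ : Kˣ) : K) * g.s)⟩⟩

@[simp] lemma mul_t (g h : Aff K) : (g * h).t = g.t * h.t := rfl
@[simp] lemma mul_s (g h : Aff K) : (g * h).s = g.s + (g.t : K) * h.s := rfl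
@[simp] lemma one_t : (1 : Aff K).t = 1 := rfl
@[simp] lemma one_s : (1 : Aff K).s = 0 := rfl
@[simp] lemma inv_t (g : Aff K) : (g⁻¹).t = g.t⁻¹ := rfl
@[simp] lemma inv_s (g : Aff K) : (g⁻¹).s = -(((g.t⁻¹ : Kˣ) : K) * g.s) := rfl

instance : Group (Aff K) where
  mul_assoc a b c := by
    ext
    · simp [mul_assoc]
    · simp only [mul_s, mul_t, Units.val_mul]; ring
  one_mul a := by ext <;> simp
  mul_one a := by ext <;> simp
  inv_mul_cancel a := by
    ext
    · simp
    · simp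

/-- The element `x_λ` of the group `TS`. -/
def xT (u : Kˣ) : Aff K := ⟨u, 0⟩

/-- The element `s_b` of the group `TS`. -/
def sS (b : K) : Aff K := ⟨1, b⟩

@[simp] lemma xT_t (u : Kˣ) : (xT u : Aff K).t = u := rfl
@[simp] lemma xT_s (u : Kˣ) : (xT u : Aff K).s = 0 := rfl
@[simp] lemma sS_t (b : K) : (sS b : Aff K).t = 1 := rfl
@[simp] lemma sS_s (b : K) : (sS b : Aff K).s = b := rfl

/-- `T ≅ k^×` as a subgroup of `TS`. -/
def xTHom : Kˣ →* Aff K where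
  toFun := xT
  map_one' := rfl
  map_mul' u v := by ext <;> simp [xT]

@[simp] lemma xTHom_apply (u : Kˣ) : (xTHom u : Aff K) = xT u := rfl

lemma mul_sS (g : Aff K) (b : K) : g * sS b = sS ((g.t : K) * b) * g := by
  ext
  · simp
  · simp [add_comm]

lemma sS_mul (b : K) (g : Aff K) : sS b * g = g * sS (((g.t⁻¹ : Kˣ) : K) * b) := by
  ext
  · simp
  · simp [Units.mul_inv_cancel_left, add_comm]

lemma aff_decomp (g : Aff K) : g = xT g.t * sS (((g.t⁻¹ : Kˣ) : K) * g.s) := by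
  ext
  · simp
  · simp [Units.mul_inv_cancel_left]

instance [TopologicalSpace K] : TopologicalSpace (Aff K) :=
  TopologicalSpace.induced (fun g : Aff K => ((g.t, g.s) : Kˣ × K)) inferInstance

end Aff

/-! ### Generalities on representations of a monoid on complex vector spaces. -/

namespace GRep

variable {G : Type*} [Monoid G]

section MonoidModules

variable {V W : Type*} [AddCommMonoid V] [Module ℂ V] [AddCommMonoid W] [Module ℂ W]

/-- A submodule invariant under the representation. -/
def Invariant (ρ : Representation ℂ G V) (U : Submodule ℂ V) : Prop :=
  ∀ (g : G) (v : V), v ∈ U → ρ g v ∈ U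

/-- Equivariance of a linear map with respect to two representations. -/
def Equivariant (ρ : Representation ℂ G V) (σ : Representation ℂ G W) (f : V →ₗ[ℂ] W) : Prop :=
  ∀ (g : G) (v : V), f (ρ g v) = σ g (f v)

/-- Isomorphism of representations. -/
def Iso (ρ : Representation ℂ G V) (σ : Representation ℂ G W) : Prop :=
  ∃ e : V ≃ₗ[ℂ] W, ∀ (g : G) (v : V), e (ρ g v) = σ g (e v)

/-- Irreducibility. -/
def Irred (ρ : Representation ℂ G V) : Prop :=
  Nontrivial V ∧ ∀ U : Submodule ℂ V, Invariant ρ U → U = ⊥ ∨ U = ⊤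

/-- Subrepresentation on an invariant submodule. -/
def sub (ρ : Representation ℂ G V) {U : Submodule ℂ V} (hU : Invariant ρ U) :
    Representation ℂ G ↥U where
  toFun g := (ρ g).restrict fun v hv => hU g v hv
  map_one' := by
    apply LinearMap.ext; intro v; apply Subtype.ext
    simp [LinearMap.restrict_apply]
  map_mul' g h := by
    apply LinearMap.ext; intro v; apply Subtype.ext
    simp [LinearMap.restrict_apply]

@[simp] lemma sub_apply (ρ : Representation ℂ G V) {U : Submodule ℂ V} (hU : Invariant ρ U)
    (g : G) (v : ↥U) : ((sub ρ hU g v : ↥U) : V) = ρ g (v : V) := rfl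

lemma ker_invariant (ρ : Representation ℂ G V) (σ : Representation ℂ G W)
    (f : V →ₗ[ℂ] W) (hf : Equivariant ρ σ f) : Invariant ρ (LinearMap.ker f) := by
  intro g v hv
  rw [LinearMap.mem_ker] at hv ⊢
  rw [hf g v, hv, map_zero]

lemma range_invariant (ρ : Representation ℂ G V) (σ : Representation ℂ G W)
    (f : V →ₗ[ℂ] W) (hf : Equivariant ρ σ f) : Invariant σ (LinearMap.range f) := by
  rintro g w ⟨v, rfl⟩
  exact ⟨ρ g v, hf g v⟩

lemma map_invariant (ρ : Representation ℂ G V) (σ : Representation ℂ G W)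
    (f : V →ₗ[ℂ] W) (hf : Equivariant ρ σ f) (U : Submodule ℂ V) (hU : Invariant ρ U) :
    Invariant σ (U.map f) := by
  rintro g w ⟨v, hv, rfl⟩
  exact ⟨ρ g v, hU g v hv, hf g v⟩

end MonoidModules

section GroupModules

variable {V W : Type*} [AddCommGroup V] [Module ℂ V] [AddCommGroup W] [Module ℂ W]

/-- Quotient representation. -/
def quot (ρ : Representation ℂ G V) (U : Submodule ℂ V) (hU : Invariant ρ U) :
    Representation ℂ G (V ⧸ U) where
  toFun g := U.mapQ U (ρ g) fun v hv => hU g v hv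
  map_one' := by
    apply LinearMap.ext; intro x
    obtain ⟨v, rfl⟩ := Submodule.Quotient.mk_surjective U x
    simp [Submodule.mapQ_apply]
  map_mul' g h := by
    apply LinearMap.ext; intro x
    obtain ⟨v, rfl⟩ := Submodule.Quotient.mk_surjective U x
    simp [Submodule.mapQ_apply]

@[simp] lemma quot_apply (ρ : Representation ℂ G V) (U : Submodule ℂ V) (hU : Invariant ρ U)
    (g : G) (v : V) :
    quot ρ U hU g (Submodule.Quotient.mk v) = Submodule.Quotient.mk (ρ g v) := rfl

/-- Subquotient representation on `B/A`. -/
def subquot (ρ : Representation ℂ G V) {A B : Submodule ℂ V}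
    (hA : Invariant ρ A) (hB : Invariant ρ B) :
    Representation ℂ G (↥B ⧸ A.comap B.subtype) :=
  quot (sub ρ hB) (A.comap B.subtype) fun g v hv => hA g v.1 hv

lemma mkQ_equivariant (ρ : Representation ℂ G V) (U : Submodule ℂ V) (hU : Invariant ρ U) :
    Equivariant ρ (quot ρ U hU) U.mkQ := by
  intro g v
  show Submodule.Quotient.mk (ρ g v) = quot ρ U hU g (Submodule.Quotient.mk v)
  rw [quot_apply]

end GroupModules

end GRep

/-! ### TS-modules: representations of the affine group. -/

/-- A `TS`-module structure on `V` is a representation of the group `TS ≅ Gl_a(1)`. -/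
abbrev Rep (K : Type*) [Field K] (V : Type*) [AddCommGroup V] [Module ℂ V] :=
  Representation ℂ (Aff K) V

section RepDefs

open Aff

variable {K : Type*} [Field K]
variable {V W : Type*} [AddCommGroup V] [Module ℂ V] [AddCommGroup W] [Module ℂ W]

/-- Smoothness: every vector has open stabilizer. -/
def IsSmoothRep [TopologicalSpace K] (ρ : Rep K V) : Prop :=
  ∀ v : V, IsOpen {g : Aff K | ρ g v = v}

/-- Smoothness of a `T`-module, i.e. of a representation of `T ≅ k^×`. -/
def TIsSmooth {X : Type*} [AddCommMonoid X] [Module ℂ X] [TopologicalSpace K]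
    (τ : Representation ℂ Kˣ X) : Prop :=
  ∀ x : X, IsOpen {u : Kˣ | τ u x = x}

/-- Smooth character of `T ≅ k^×` (open kernel, equivalently locally constant). -/
def SmoothMulChar [TopologicalSpace K] (χ : Kˣ →* ℂˣ) : Prop :=
  IsOpen {u : Kˣ | χ u = 1}

/-- The space `V^S` of `S`-invariants. -/
def sInv (ρ : Rep K V) : Submodule ℂ V where
  carrier := {v | ∀ b : K, ρ (sS b) v = v}
  zero_mem' := fun b => map_zero _
  add_mem' {a b} ha hb := fun c => by rw [map_add, ha c, hb c]
  smul_mem' c v hv := fun b => by rw [map_smul, hv b]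

@[simp] lemma mem_sInv (ρ : Rep K V) (v : V) :
    v ∈ sInv ρ ↔ ∀ b : K, ρ (sS b) v = v := Iff.rfl

/-- The `χ`-eigenspace `X^{T,χ}` of a `T`-module. -/
def tEigenT {X : Type*} [AddCommMonoid X] [Module ℂ X]
    (τ : Representation ℂ Kˣ X) (χ : Kˣ →* ℂˣ) : Submodule ℂ X where
  carrier := {x | ∀ u : Kˣ, τ u x = (χ u : ℂ) • x}
  zero_mem' := fun u => by simp
  add_mem' {a b} ha hb := fun u => by rw [map_add, ha u, hb u, smul_add]
  smul_mem' c x hx := fun u => by rw [map_smul, hx u]; exact smul_comm c ((χ u : ℂ)) x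

@[simp] lemma mem_tEigenT {X : Type*} [AddCommMonoid X] [Module ℂ X]
    (τ : Representation ℂ Kˣ X) (χ : Kˣ →* ℂˣ) (x : X) :
    x ∈ tEigenT τ χ ↔ ∀ u : Kˣ, τ u x = (χ u : ℂ) • x := Iff.rfl

/-- The `χ`-eigenspace `V^{T,χ}` of a `TS`-module. -/
def tEigen (ρ : Rep K V) (χ : Kˣ →* ℂˣ) : Submodule ℂ V := tEigenT (ρ.comp xTHom) χ

/-- The kernel of the projection to the `S`-coinvariants `V_S`. -/
def sCoinvKer (ρ : Rep K V) : Submodule ℂ V :=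
  Submodule.span ℂ {w : V | ∃ (b : K) (v : V), w = ρ (sS b) v - v}

/-- The kernel of the projection to the twisted coinvariants `V_{S,ψ'}`. -/
def sTwistKer (ρ : Rep K V) (ψ' : AddChar K ℂ) : Submodule ℂ V :=
  Submodule.span ℂ {w : V | ∃ (b : K) (v : V), w = ρ (sS b) v - ψ' b • v}

/-- The kernel of the projection to the `χ`-coinvariants `X_{T,χ}` of a `T`-module. -/
def tTwistKerT {X : Type*} [AddCommGroup X] [Module ℂ X]
    (τ : Representation ℂ Kˣ X) (χ : Kˣ →* ℂˣ) : Submodule ℂ X :=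
  Submodule.span ℂ {w : X | ∃ (u : Kˣ) (x : X), w = τ u x - (χ u : ℂ) • x}

/-- The kernel of the projection to the `χ`-coinvariants `V_{T,χ}` of a `TS`-module. -/
def tTwistKer (ρ : Rep K V) (χ : Kˣ →* ℂˣ) : Submodule ℂ V := tTwistKerT (ρ.comp xTHom) χ

lemma sCoinvKer_invariant (ρ : Rep K V) : GRep.Invariant ρ (sCoinvKer ρ) := by
  intro g v hv
  have h : sCoinvKer ρ ≤ Submodule.comap (ρ g) (sCoinvKer ρ) := by
    refine Submodule.span_le.2 ?_
    rintro w ⟨b, v', rfl⟩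
    simp only [SetLike.mem_coe, Submodule.mem_comap, map_sub]
    have h1 : ρ g (ρ (sS b) v') = ρ (sS ((g.t : K) * b)) (ρ g v') := by
      rw [← Module.End.mul_apply, ← map_mul, mul_sS, map_mul, Module.End.mul_apply]
    rw [h1]
    exact Submodule.subset_span ⟨(g.t : K) * b, ρ g v', rfl⟩
  exact h hv

lemma sInv_invariant (ρ : Rep K V) : GRep.Invariant ρ (sInv ρ) := by
  intro g v hv
  rw [mem_sInv] at hv ⊢
  intro b
  have h1 : ρ (sS b) (ρ g v) = ρ g (ρ (sS (((g.t⁻¹ : Kˣ) : K) * b)) v) := by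
    rw [← Module.End.mul_apply, ← map_mul, sS_mul, map_mul, Module.End.mul_apply]
  rw [h1, hv _]

/-- The `S`-coinvariants `π₀(V) = V_S` as a `TS`-module (`S` acting trivially). -/
def piZeroRep (ρ : Rep K V) : Rep K (V ⧸ sCoinvKer ρ) :=
  GRep.quot ρ (sCoinvKer ρ) (sCoinvKer_invariant ρ)

/-- The `S`-coinvariants `π₀(V) = V_S` as a `T`-module. -/
def piZeroT (ρ : Rep K V) : Representation ℂ Kˣ (V ⧸ sCoinvKer ρ) :=
  (piZeroRep ρ).comp xTHom

/-- The `T`-module structure on `κ(V) = V^S`. -/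
def sInvT (ρ : Rep K V) : Representation ℂ Kˣ ↥(sInv ρ) :=
  (GRep.sub ρ (sInv_invariant ρ)).comp xTHom

/-- A `TS`-module is perfect if all its eigenspaces `V^{T,χ}` for smooth `χ` vanish. -/
def Perfect [TopologicalSpace K] (ρ : Rep K V) : Prop :=
  ∀ χ : Kˣ →* ℂˣ, SmoothMulChar χ → tEigen ρ χ = ⊥

/-- A finite-dimensional `T`-module is cyclic if each generalized eigenspace is a single
Jordan block; equivalently all eigenspaces `X^{T,χ}` have dimension at most one. -/
def TCyclic {X : Type*} [AddCommGroup X] [Module ℂ X]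
    (τ : Representation ℂ Kˣ X) : Prop :=
  ∀ χ : Kˣ →* ℂˣ, Module.finrank ℂ ↥(tEigenT τ χ) ≤ 1

lemma sCoinvKer_le_comap (ρ : Rep K V) (σ : Rep K W)
    (f : V →ₗ[ℂ] W) (hf : GRep.Equivariant ρ σ f) :
    sCoinvKer ρ ≤ (sCoinvKer σ).comap f := by
  refine Submodule.span_le.2 ?_
  rintro w ⟨b, v, rfl⟩
  simp only [SetLike.mem_coe, Submodule.mem_comap, map_sub]
  rw [hf]
  exact Submodule.subset_span ⟨b, f v, rfl⟩

/-- The map induced by an equivariant map on the `S`-coinvariants `π₀`. -/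
def piZeroMap (ρ : Rep K V) (σ : Rep K W) (f : V →ₗ[ℂ] W) (hf : GRep.Equivariant ρ σ f) :
    (V ⧸ sCoinvKer ρ) →ₗ[ℂ] (W ⧸ sCoinvKer σ) :=
  Submodule.mapQ _ _ f (sCoinvKer_le_comap ρ σ f hf)

lemma piZeroMap_equivariant (ρ : Rep K V) (σ : Rep K W) (f : V →ₗ[ℂ] W)
    (hf : GRep.Equivariant ρ σ f) :
    GRep.Equivariant (piZeroRep ρ) (piZeroRep σ) (piZeroMap ρ σ f hf) := by
  intro g x
  obtain ⟨v, rfl⟩ := Submodule.Quotient.mk_surjective _ x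
  show piZeroMap ρ σ f hf (piZeroRep ρ g (Submodule.Quotient.mk v))
      = piZeroRep σ g (piZeroMap ρ σ f hf (Submodule.Quotient.mk v))
  rw [show piZeroRep ρ g (Submodule.Quotient.mk v) = Submodule.Quotient.mk (ρ g v) from rfl]
  rw [show piZeroMap ρ σ f hf (Submodule.Quotient.mk v) = Submodule.Quotient.mk (f v) from rfl]
  rw [show piZeroMap ρ σ f hf (Submodule.Quotient.mk (ρ g v))
      = Submodule.Quotient.mk (f (ρ g v)) from rfl]
  rw [show piZeroRep σ g (Submodule.Quotient.mk (f v)) = Submodule.Quotient.mk (σ g (f v)) from rfl]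
  rw [hf]

lemma kappaImg_invariant (ρ : Rep K V) :
    GRep.Invariant (piZeroT ρ) ((sInv ρ).map (sCoinvKer ρ).mkQ) := by
  rintro u w ⟨v, hv, rfl⟩
  refine ⟨ρ (xT u) v, sInv_invariant ρ (xT u) v hv, ?_⟩
  rfl

end RepDefs

/-! ### Composition series and degree. -/

/-- A composition series for a `TS`-module, witnessing finite length: a maximal chain of
invariant submodules (the subquotients are then irreducible). -/
structure CompSeries {K : Type*} [Field K] {V : Type*} [AddCommGroup V] [Module ℂ V]
    (ρ : Rep K V) where
  n : ℕ
  W : ℕ → Submodule ℂ V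
  bot : W 0 = ⊥
  top : W n = ⊤
  inv : ∀ i, GRep.Invariant ρ (W i)
  lt : ∀ i < n, W i < W (i + 1)
  maximal : ∀ i < n, ∀ C : Submodule ℂ V, GRep.Invariant ρ C → W i ≤ C → C ≤ W (i + 1) →
    C = W i ∨ C = W (i + 1)

/-- The number of Jordan–Hölder constituents of a composition series isomorphic to a given
representation `σ` (applied with `σ = 𝕊`, this is the degree). -/
def CompSeries.deg {K : Type*} [Field K] {V : Type*} [AddCommGroup V] [Module ℂ V]
    {ρ : Rep K V} (c : CompSeries ρ) {W₀ : Type*} [AddCommMonoid W₀] [Module ℂ W₀]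
    (σ : Representation ℂ (Aff K) W₀) : ℕ :=
  (Finset.univ.filter fun i : Fin c.n =>
    GRep.Iso (GRep.subquot ρ (c.inv i.1) (c.inv (i.1 + 1))) σ).card

/-! ### Fiber products of a `T`-module with a `TS`-module over a `T`-module. -/

section Fiber

open Aff

variable {K : Type*} [Field K]
variable {X Y E : Type*} [AddCommGroup X] [Module ℂ X] [AddCommGroup Y] [Module ℂ Y]
  [AddCommGroup E] [Module ℂ E]

/-- The product `TS`-module `X × E` where `S` acts trivially on the `T`-module `X`. -/
def prodRepTE (τ : Representation ℂ Kˣ X) (ρ : Rep K E) : Rep K (X × E) where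
  toFun g := (τ g.t).prodMap (ρ g)
  map_one' := by
    apply LinearMap.ext; rintro ⟨x, v⟩
    simp
  map_mul' g h := by
    apply LinearMap.ext; rintro ⟨x, v⟩
    simp [map_mul]

/-- The underlying space of the fiber product `𝔼[f] = X ×_Y E`. -/
def fiberKer (f : X →ₗ[ℂ] Y) (q : E →ₗ[ℂ] Y) : Submodule ℂ (X × E) :=
  LinearMap.ker (f.comp (LinearMap.fst ℂ X E) - q.comp (LinearMap.snd ℂ X E))

lemma mem_fiberKer (f : X →ₗ[ℂ] Y) (q : E →ₗ[ℂ] Y) (p : X × E) :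
    p ∈ fiberKer f q ↔ f p.1 = q p.2 := by
  simp [fiberKer, sub_eq_zero]

lemma fiber_invariant (τX : Representation ℂ Kˣ X) (ρE : Rep K E)
    (τY : Representation ℂ Kˣ Y) (f : X →ₗ[ℂ] Y) (q : E →ₗ[ℂ] Y)
    (hf : ∀ (u : Kˣ) (x : X), f (τX u x) = τY u (f x))
    (hq : sCoinvKer ρE ≤ LinearMap.ker q)
    (hqT : ∀ (u : Kˣ) (v : E), q (ρE (xT u) v) = τY u (q v)) :
    GRep.Invariant (prodRepTE τX ρE) (fiberKer f q) := by
  intro g p hp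
  rw [mem_fiberKer] at hp ⊢
  have hsb : q (ρE (sS (((g.t⁻¹ : Kˣ) : K) * g.s)) p.2) = q p.2 := by
    have h1 : ρE (sS (((g.t⁻¹ : Kˣ) : K) * g.s)) p.2 - p.2 ∈ sCoinvKer ρE :=
      Submodule.subset_span ⟨_, _, rfl⟩
    have h2 := hq h1
    rw [LinearMap.mem_ker, map_sub, sub_eq_zero] at h2
    exact h2
  have hdecomp : ρE g p.2 = ρE (xT g.t) (ρE (sS (((g.t⁻¹ : Kˣ) : K) * g.s)) p.2) := by
    conv_lhs => rw [aff_decomp g]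
    rw [map_mul, Module.End.mul_apply]
  have h1 : ((prodRepTE τX ρE) g p).1 = τX g.t p.1 := rfl
  have h2 : ((prodRepTE τX ρE) g p).2 = ρE g p.2 := rfl
  rw [h1, h2, hf, hp, hdecomp, hqT, hsb]

end Fiber

/-! ### Jordan blocks of finite-dimensional `T`-modules. -/

section Jordan

variable {K : Type*} [Field K]
variable {X : Type*} [AddCommGroup X] [Module ℂ X]

/-- A Jordan block of a `T`-module: a nonzero indecomposable invariant direct summand. -/
def IsJordanBlock (τ : Representation ℂ Kˣ X) (J : Submodule ℂ X) : Prop :=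
  J ≠ ⊥ ∧ GRep.Invariant τ J ∧ (∃ C : Submodule ℂ X, GRep.Invariant τ C ∧ IsCompl J C) ∧
    ∀ A B : Submodule ℂ X, GRep.Invariant τ A → GRep.Invariant τ B → A ≤ J → B ≤ J →
      A ⊓ B = ⊥ → A ⊔ B = J → A = ⊥ ∨ B = ⊥

end Jordan

/-! ### Invariants and coinvariants for a normal subgroup of an arbitrary group. -/

section Grp

variable {Γ : Type*} [Group Γ]
variable {V W : Type*} [AddCommGroup V] [Module ℂ V] [AddCommGroup W] [Module ℂ W]

/-- Invariants `V^N` under a subgroup `N`. -/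
def grpInv (ρ : Representation ℂ Γ V) (N : Subgroup Γ) : Submodule ℂ V where
  carrier := {v | ∀ n ∈ N, ρ n v = v}
  zero_mem' := fun n _ => map_zero _
  add_mem' {a b} ha hb := fun n hn => by rw [map_add, ha n hn, hb n hn]
  smul_mem' c v hv := fun n hn => by rw [map_smul, hv n hn]

@[simp] lemma mem_grpInv (ρ : Representation ℂ Γ V) (N : Subgroup Γ) (v : V) :
    v ∈ grpInv ρ N ↔ ∀ n ∈ N, ρ n v = v := Iff.rfl

/-- The kernel of the projection to the coinvariants `V_N` under a subgroup `N`. -/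
def grpCoinvKer (ρ : Representation ℂ Γ V) (N : Subgroup Γ) : Submodule ℂ V :=
  Submodule.span ℂ {w : V | ∃ n ∈ N, ∃ v : V, w = ρ n v - v}

lemma grpInv_invariant (ρ : Representation ℂ Γ V) (N : Subgroup Γ) [hN : N.Normal] :
    GRep.Invariant ρ (grpInv ρ N) := by
  intro γ v hv
  rw [mem_grpInv] at hv ⊢
  intro n hn
  have hmem : γ⁻¹ * n * γ ∈ N := by
    have := hN.conj_mem n hn γ⁻¹
    simpa using this
  have key : ρ n (ρ γ v) = ρ γ (ρ (γ⁻¹ * n * γ) v) := by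
    rw [← Module.End.mul_apply, ← map_mul, ← Module.End.mul_apply, ← map_mul]
    congr 1
    group
  rw [key, hv _ hmem]

lemma grpCoinvKer_invariant (ρ : Representation ℂ Γ V) (N : Subgroup Γ) [hN : N.Normal] :
    GRep.Invariant ρ (grpCoinvKer ρ N) := by
  intro γ v hv
  have h : grpCoinvKer ρ N ≤ Submodule.comap (ρ γ) (grpCoinvKer ρ N) := by
    refine Submodule.span_le.2 ?_
    rintro w ⟨n, hn, v', rfl⟩
    simp only [SetLike.mem_coe, Submodule.mem_comap, map_sub]
    have key : ρ γ (ρ n v') = ρ (γ * n * γ⁻¹) (ρ γ v') := by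
      rw [← Module.End.mul_apply, ← map_mul, ← Module.End.mul_apply, ← map_mul]
      congr 1
      group
    rw [key]
    exact Submodule.subset_span ⟨γ * n * γ⁻¹, hN.conj_mem n hn γ, ρ γ v', rfl⟩
  exact h hv

/-- The map induced on `N`-invariants by an equivariant map. -/
def grpInvRestrict (ρ : Representation ℂ Γ V) (σ : Representation ℂ Γ W) (N : Subgroup Γ)
    (f : V →ₗ[ℂ] W) (hf : GRep.Equivariant ρ σ f) : ↥(grpInv ρ N) →ₗ[ℂ] ↥(grpInv σ N) :=
  f.restrict (fun v hv => by
    rw [mem_grpInv] at hv ⊢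
    intro n hn
    rw [← hf n v, hv n hn])

lemma grpCoinvKer_le_comap (ρ : Representation ℂ Γ V) (σ : Representation ℂ Γ W) (N : Subgroup Γ)
    (f : V →ₗ[ℂ] W) (hf : GRep.Equivariant ρ σ f) :
    grpCoinvKer ρ N ≤ (grpCoinvKer σ N).comap f := by
  refine Submodule.span_le.2 ?_
  rintro w ⟨n, hn, v, rfl⟩
  simp only [SetLike.mem_coe, Submodule.mem_comap, map_sub]
  rw [hf]
  exact Submodule.subset_span ⟨n, hn, f v, rfl⟩

/-- The map induced on `N`-coinvariants by an equivariant map. -/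
def grpCoinvMap (ρ : Representation ℂ Γ V) (σ : Representation ℂ Γ W) (N : Subgroup Γ)
    (f : V →ₗ[ℂ] W) (hf : GRep.Equivariant ρ σ f) :
    (V ⧸ grpCoinvKer ρ N) →ₗ[ℂ] (W ⧸ grpCoinvKer σ N) :=
  Submodule.mapQ _ _ f (grpCoinvKer_le_comap ρ σ N f hf)

end Grp

/-! ### Tate L-factors of finite-dimensional `T`-modules. -/

section Lfactor

variable {K : Type*} [NontriviallyNormedField K]
variable {X : Type*} [AddCommGroup X] [Module ℂ X]

/-- The part of a `T`-module where the `χ`-twisted action is unramified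
(trivial on the norm-one units). -/
def unrPart (τ : Representation ℂ Kˣ X) (χ : Kˣ →* ℂˣ) : Submodule ℂ X where
  carrier := {x | ∀ u : Kˣ, ‖(u : K)‖ = 1 → (χ u : ℂ) • τ u x = x}
  zero_mem' := fun u _ => by simp
  add_mem' {a b} ha hb := fun u hu => by rw [map_add, smul_add, ha u hu, hb u hu]
  smul_mem' c x hx := fun u hu => by
    rw [map_smul, smul_comm, hx u hu]

lemma unrPart_stable (τ : Representation ℂ Kˣ X) (χ : Kˣ →* ℂˣ) (ϖ : Kˣ) :
    ∀ x ∈ unrPart τ χ, ((χ ϖ : ℂ) • τ ϖ) x ∈ unrPart τ χ := by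
  intro x hx u hu
  have comm : τ u (τ ϖ x) = τ ϖ (τ u x) := by
    rw [← Module.End.mul_apply, ← map_mul, mul_comm, map_mul, Module.End.mul_apply]
  calc (χ u : ℂ) • τ u (((χ ϖ : ℂ) • τ ϖ) x)
      = (χ ϖ : ℂ) • ((χ u : ℂ) • τ u (τ ϖ x)) := by
        rw [LinearMap.smul_apply, map_smul, smul_comm]
    _ = (χ ϖ : ℂ) • τ ϖ ((χ u : ℂ) • τ u x) := by rw [comm, map_smul]
    _ = ((χ ϖ : ℂ) • τ ϖ) x := by rw [hx u hu, LinearMap.smul_apply]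

/-- The twisted uniformizer action on the unramified part. -/
def twistOp (τ : Representation ℂ Kˣ X) (χ : Kˣ →* ℂˣ) (ϖ : Kˣ) :
    ↥(unrPart τ χ) →ₗ[ℂ] ↥(unrPart τ χ) :=
  LinearMap.restrict ((χ ϖ : ℂ) • τ ϖ) (unrPart_stable τ χ ϖ)

/-- The Tate `L`-factor `L(s, χ ⊗ X) = det(1 - q^{-s}·(χ·τ)(ϖ) | X^{unr,χ})⁻¹` of a
(finite-dimensional) `T`-module `X`, relative to a uniformizer `ϖ`. -/
def Lfactor (τ : Representation ℂ Kˣ X) (χ : Kˣ →* ℂˣ) (ϖ : Kˣ) (s : ℂ) : ℂ :=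
  (LinearMap.det (LinearMap.id - (‖(ϖ : K)‖ : ℂ) ^ s • twistOp τ χ ϖ))⁻¹

end Lfactor

/-! ### The concrete `TS`-modules `𝕊`, `C_c^∞(k)`, `C_b^∞(k^×)` and `𝔼[χ]`. -/

section Concrete

open Aff

variable (K : Type*) [NontriviallyNormedField K]

/-- The representation of `TS` on functions on `k^×`:
`(s_b g)(x) = ψ(bx) g(x)`, `(x_λ g)(x) = g(xλ)`. -/
def repCx (ψ : AddChar K ℂ) : Rep K (Kˣ → ℂ) where
  toFun g :=
    { toFun := fun f x => ψ (g.s * (x : K)) * f (x * g.t)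
      map_add' := fun f₁ f₂ => by funext x; simp [mul_add]
      map_smul' := fun c f => by
        funext x
        simp only [Pi.smul_apply, smul_eq_mul, RingHom.id_apply]
        ring }
  map_one' := by
    apply LinearMap.ext; intro f; funext x
    simp
  map_mul' g h := by
    apply LinearMap.ext; intro f; funext x
    show ψ ((g.s + (g.t : K) * h.s) * (x : K)) * f (x * (g.t * h.t))
        = ψ (g.s * (x : K)) * (ψ (h.s * ((x * g.t : Kˣ) : K)) * f (x * g.t * h.t))
    have harg : (g.s + (g.t : K) * h.s) * (x : K)
        = g.s * (x : K) + h.s * ((x * g.t : Kˣ) : K) := by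
      push_cast
      ring
    rw [harg, AddChar.map_add_eq_mul, ← mul_assoc x g.t h.t]
    ring

@[simp] lemma repCx_apply (ψ : AddChar K ℂ) (g : Aff K) (f : Kˣ → ℂ) (x : Kˣ) :
    repCx K ψ g f x = ψ (g.s * (x : K)) * f (x * g.t) := rfl

/-- The `χ`-twisted representation of `TS` on functions on `k`:
`(s_b g)(x) = ψ(bx) g(x)`, `(x_λ g)(x) = χ(λ) g(xλ)`.  (Take `χ = 1` for the
untwisted action on `C_c^∞(k)`; the module `𝔼[χ]` is `C_c^∞(k)` with the twisted action.) -/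
def repCc (ψ : AddChar K ℂ) (χ : Kˣ →* ℂˣ) : Rep K (K → ℂ) where
  toFun g :=
    { toFun := fun f x => (χ g.t : ℂ) * ψ (g.s * x) * f (x * (g.t : K))
      map_add' := fun f₁ f₂ => by funext x; simp [mul_add]
      map_smul' := fun c f => by
        funext x
        simp only [Pi.smul_apply, smul_eq_mul, RingHom.id_apply]
        ring }
  map_one' := by
    apply LinearMap.ext; intro f; funext x
    simp
  map_mul' g h := by
    apply LinearMap.ext; intro f; funext x
    show (χ (g.t * h.t) : ℂ) * ψ ((g.s + (g.t : K) * h.s) * x) * f (x * ((g.t * h.t : Kˣ) : K))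
        = (χ g.t : ℂ) * ψ (g.s * x) * ((χ h.t : ℂ) * ψ (h.s * (x * (g.t : K)))
            * f (x * (g.t : K) * (h.t : K)))
    have harg : (g.s + (g.t : K) * h.s) * x = g.s * x + h.s * (x * (g.t : K)) := by ring
    have harg2 : x * ((g.t * h.t : Kˣ) : K) = x * (g.t : K) * (h.t : K) := by
      push_cast
      ring
    rw [harg, harg2, AddChar.map_add_eq_mul, map_mul]
    push_cast
    ring

@[simp] lemma repCc_apply (ψ : AddChar K ℂ) (χ : Kˣ →* ℂˣ) (g : Aff K) (f : K → ℂ) (x : K) :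
    repCc K ψ χ g f x = (χ g.t : ℂ) * ψ (g.s * x) * f (x * (g.t : K)) := rfl

/-- The one-dimensional `TS`-module `ℂ_χ` on which `S` acts trivially and `x_λ` by `χ(λ)`. -/
def chiRep (χ : Kˣ →* ℂˣ) : Rep K ℂ where
  toFun g := (χ g.t : ℂ) • LinearMap.id
  map_one' := by
    apply LinearMap.ext; intro c
    simp
  map_mul' g h := by
    apply LinearMap.ext; intro c
    simp only [mul_t, map_mul, LinearMap.smul_apply, LinearMap.id_apply, Module.End.mul_apply,
      Units.val_mul, smul_eq_mul]
    ring

/-- `C_c^∞(k)`: locally constant, compactly supported functions on `k`. -/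
def CcK : Submodule ℂ (K → ℂ) where
  carrier := {f | IsLocallyConstant f ∧ HasCompactSupport f}
  zero_mem' := ⟨IsLocallyConstant.const 0, by
    rw [hasCompactSupport_def]
    simp⟩
  add_mem' {a b} ha hb := ⟨ha.1.comp₂ hb.1 (· + ·), ha.2.add hb.2⟩
  smul_mem' c f hf := by
    refine ⟨?_, hf.2.mono (Function.support_const_smul_subset c f)⟩
    exact hf.1.comp (fun z => c * z)

@[simp] lemma mem_CcK (f : K → ℂ) :
    f ∈ CcK K ↔ IsLocallyConstant f ∧ HasCompactSupport f := Iff.rfl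

/-- `𝕊 = C_c^∞(k^×)`: locally constant, compactly supported functions on `k^×`. -/
def SSx : Submodule ℂ (Kˣ → ℂ) where
  carrier := {f | IsLocallyConstant f ∧ HasCompactSupport f}
  zero_mem' := ⟨IsLocallyConstant.const 0, by
    rw [hasCompactSupport_def]
    simp⟩
  add_mem' {a b} ha hb := ⟨ha.1.comp₂ hb.1 (· + ·), ha.2.add hb.2⟩
  smul_mem' c f hf := by
    refine ⟨?_, hf.2.mono (Function.support_const_smul_subset c f)⟩
    exact hf.1.comp (fun z => c * z)

@[simp] lemma mem_SSx (f : Kˣ → ℂ) :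
    f ∈ SSx K ↔ IsLocallyConstant f ∧ HasCompactSupport f := Iff.rfl

/-- `C_b^∞(k^×)`: locally constant functions on `k^×` whose support has compact closure
in `k`. -/
def Cb : Submodule ℂ (Kˣ → ℂ) where
  carrier := {f | IsLocallyConstant f ∧
    IsCompact (closure (((↑) : Kˣ → K) '' Function.support f))}
  zero_mem' := ⟨IsLocallyConstant.const 0, by simp⟩
  add_mem' {a b} ha hb := by
    refine ⟨ha.1.comp₂ hb.1 (· + ·), ?_⟩
    refine IsCompact.of_isClosed_subset (ha.2.union hb.2) isClosed_closure ?_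
    refine closure_minimal ?_ (ha.2.isClosed.union hb.2.isClosed)
    refine (Set.image_mono (Function.support_add _ _)).trans ?_
    rw [Set.image_union]
    exact Set.union_subset_union subset_closure subset_closure
  smul_mem' c f hf := by
    refine ⟨hf.1.comp (fun z => c * z), ?_⟩
    refine IsCompact.of_isClosed_subset hf.2 isClosed_closure ?_
    refine closure_mono ?_
    exact Set.image_mono (Function.support_const_smul_subset c f)

@[simp] lemma mem_Cb (f : Kˣ → ℂ) :
    f ∈ Cb K ↔ IsLocallyConstant f ∧
      IsCompact (closure (((↑) : Kˣ → K) '' Function.support f)) := Iff.rfl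

variable {K}

lemma SSx_invariant (ψ : AddChar K ℂ) (hψlc : IsLocallyConstant (⇑ψ)) :
    GRep.Invariant (repCx K ψ) (SSx K) := by
  rintro g f hf
  rw [mem_SSx] at hf ⊢
  obtain ⟨hlc, hcs⟩ := hf
  have heq : repCx K ψ g f
      = (fun x : Kˣ => ψ (g.s * (x : K))) * (f ∘ (Homeomorph.mulRight g.t)) := rfl
  constructor
  · rw [heq]
    refine IsLocallyConstant.mul ?_ ?_
    · exact hψlc.comp_continuous (continuous_const.mul Units.continuous_val)
    · exact hlc.comp_continuous (Homeomorph.mulRight g.t).continuous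
  · rw [heq]
    exact (hcs.comp_homeomorph (Homeomorph.mulRight g.t)).mul_left

lemma CcK_invariant (ψ : AddChar K ℂ) (hψlc : IsLocallyConstant (⇑ψ)) (χ : Kˣ →* ℂˣ) :
    GRep.Invariant (repCc K ψ χ) (CcK K) := by
  rintro g f hf
  rw [mem_CcK] at hf ⊢
  obtain ⟨hlc, hcs⟩ := hf
  have hne : ((g.t : Kˣ) : K) ≠ 0 := g.t.ne_zero
  have heq : repCc K ψ χ g f
      = (fun x : K => (χ g.t : ℂ) * ψ (g.s * x)) * (f ∘ (Homeomorph.mulRight₀ (g.t : K) hne)) :=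
    rfl
  constructor
  · rw [heq]
    refine IsLocallyConstant.mul ?_ ?_
    · exact ((hψlc.comp_continuous (continuous_const.mul continuous_id)).comp
        (fun z => (χ g.t : ℂ) * z))
    · exact hlc.comp_continuous (Homeomorph.mulRight₀ (g.t : K) hne).continuous
  · rw [heq]
    exact (hcs.comp_homeomorph (Homeomorph.mulRight₀ (g.t : K) hne)).mul_left

/-- The `TS`-module `𝕊 = C_c^∞(k^×)`. -/
def SRep (ψ : AddChar K ℂ) (hψlc : IsLocallyConstant (⇑ψ)) : Rep K ↥(SSx K) :=
  GRep.sub (repCx K ψ) (SSx_invariant ψ hψlc)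

/-- The `TS`-module `𝔼[χ]`, i.e. `C_c^∞(k)` with the `χ`-twisted action. -/
def ERep (ψ : AddChar K ℂ) (hψlc : IsLocallyConstant (⇑ψ)) (χ : Kˣ →* ℂˣ) : Rep K ↥(CcK K) :=
  GRep.sub (repCc K ψ χ) (CcK_invariant ψ hψlc χ)

/-- The `TS`-module `𝕊^s`, a direct sum of `s` copies of `𝕊`. -/
def SRepPow (ψ : AddChar K ℂ) (hψlc : IsLocallyConstant (⇑ψ)) (s : ℕ) :
    Rep K (Fin s → ↥(SSx K)) where
  toFun g := LinearMap.pi fun i => (SRep ψ hψlc g).comp (LinearMap.proj i)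
  map_one' := by
    apply LinearMap.ext; intro v; funext i
    simp
  map_mul' g h := by
    apply LinearMap.ext; intro v; funext i
    simp [map_mul]

/-- The submodule `E` of `C_b^∞(k^×)` consisting of functions which are `χ`-eigenvectors
modulo `𝕊`; the quotient `E/𝕊` is the `χ`-eigenspace of `C_b^∞(k^×)/𝕊`. -/
def quotEigen (ψ : AddChar K ℂ) (χ : Kˣ →* ℂˣ) : Submodule ℂ (Kˣ → ℂ) where
  carrier := {f | f ∈ Cb K ∧ ∀ u : Kˣ, repCx K ψ (Aff.xT u) f - (χ u : ℂ) • f ∈ SSx K}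
  zero_mem' := ⟨(Cb K).zero_mem, fun u => by simpa using (SSx K).zero_mem⟩
  add_mem' {a b} ha hb := by
    refine ⟨(Cb K).add_mem ha.1 hb.1, fun u => ?_⟩
    rw [map_add, smul_add, add_sub_add_comm]
    exact (SSx K).add_mem (ha.2 u) (hb.2 u)
  smul_mem' c f hf := by
    refine ⟨(Cb K).smul_mem c hf.1, fun u => ?_⟩
    rw [map_smul, smul_comm, ← smul_sub]
    exact (SSx K).smul_mem c (hf.2 u)

/-- Evaluation at `0 ∈ k`, realizing the quotient map `𝔼[χ] → ℂ_χ` with kernel `𝕊`. -/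
def ev0 : ↥(CcK K) →ₗ[ℂ] ℂ where
  toFun f := (f : K → ℂ) 0
  map_add' f g := rfl
  map_smul' c f := rfl

end Concrete

/-! ### The diagonal torus in GL(2). -/

section GL2

variable {K : Type*} [Field K]

/-- The diagonal element `diag(a, b)` of `GL(2, K)`. -/
def diagGL (a b : Kˣ) : Matrix.GeneralLinearGroup (Fin 2) K where
  val := Matrix.diagonal ![(a : K), (b : K)]
  inv := Matrix.diagonal ![((a : K))⁻¹, ((b : K))⁻¹]
  val_inv := by
    ext i j
    fin_cases i <;> fin_cases j <;>
      simp [Matrix.mul_apply, Fin.sum_univ_two, Matrix.diagonal, Matrix.one_apply,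
        a.ne_zero, b.ne_zero]
  inv_val := by
    ext i j
    fin_cases i <;> fin_cases j <;>
      simp [Matrix.mul_apply, Fin.sum_univ_two, Matrix.diagonal, Matrix.one_apply,
        a.ne_zero, b.ne_zero]

end GL2

section Statements

open Aff

variable {K : Type*} [NontriviallyNormedField K] [IsUltrametricDist K] [ProperSpace K]

set_option linter.unusedSectionVars false

/-! ### Part 1: localisation for smooth `S`-modules. -/

section Part1

variable {V W : Type*} [AddCommGroup V] [Module ℂ V] [AddCommGroup W] [Module ℂ W]

lemma sS_add (a b : K) : (sS (a + b) : Aff K) = sS a * sS b := by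
  ext <;> simp [sS]

lemma rho_sS_add {V : Type*} [AddCommGroup V] [Module ℂ V] (ρ : Rep K V) (a b : K) (v : V) :
    ρ (sS (a + b)) v = ρ (sS a) (ρ (sS b) v) := by
  rw [sS_add, map_mul, Module.End.mul_apply]

/-- Smoothness with respect to `S`. -/
def SSmooth (ρ : Rep K V) : Prop := ∀ v : V, IsOpen {b : K | ρ (sS b) v = v}

lemma sS_zero : (sS (0 : K) : Aff K) = 1 := rfl

lemma SSmooth.lc {ρ : Rep K V} (h : SSmooth ρ) (v : V) :
    IsLocallyConstant (fun b : K => ρ (sS b) v) := by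
  rw [IsLocallyConstant.iff_eventually_eq]
  intro b
  have h1 : ∀ᶠ c : K in nhds (b - b), ρ (sS c) v = v := by
    apply (h v).mem_nhds
    simp [sS_zero]
  have h2 : Filter.Tendsto (fun b' : K => b' - b) (nhds b) (nhds (b - b)) :=
    (continuous_id.sub continuous_const).tendsto b
  filter_upwards [h2.eventually h1] with b' hb'
  have : b' = b + (b' - b) := by ring
  rw [this, rho_sS_add, hb']

lemma SSmooth.cont {ρ : Rep K V} (h : SSmooth ρ) (v : V) (l : V →ₗ[ℂ] ℂ) :
    Continuous (fun b : K => l (ρ (sS b) v)) :=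
  ((h.lc v).comp l).continuous

lemma psi_cont {ψ : AddChar K ℂ} (hψlc : IsLocallyConstant (⇑ψ)) : Continuous (⇑ψ) :=
  hψlc.continuous

lemma psi_ne {ψ : AddChar K ℂ} (hψne : ψ ≠ 1) : ∃ c, ψ c ≠ 1 := by
  by_contra hcon
  push Not at hcon
  exact hψne (by ext c; simp [hcon c])

lemma psi_small {ψ : AddChar K ℂ} (hψlc : IsLocallyConstant (⇑ψ)) :
    ∃ ε > 0, ∀ b : K, ‖b‖ < ε → ψ b = 1 := by
  have h := (IsLocallyConstant.iff_eventually_eq _).1 hψlc 0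
  rw [Metric.eventually_nhds_iff] at h
  obtain ⟨ε, h0, h⟩ := h
  refine ⟨ε, h0, fun b hb => ?_⟩
  rw [h (by simpa using hb), AddChar.map_zero_eq_one]

open MeasureTheory

variable [MeasurableSpace K] [BorelSpace K] (μ : Measure K) [μ.IsAddHaarMeasure]

lemma ball_shift (G : K → ℂ) (r : ℝ) (a : K) (ha : ‖a‖ ≤ r) :
    ∫ b in Metric.closedBall (0 : K) r, G (a + b) ∂μ = ∫ b in Metric.closedBall (0 : K) r, G b ∂μ := by
  rw [← integral_indicator Metric.isClosed_closedBall.measurableSet,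
    ← integral_indicator Metric.isClosed_closedBall.measurableSet,
    ← integral_add_left_eq_self ((Metric.closedBall (0 : K) r).indicator G) a]
  congr 1
  funext b
  have : (a + b ∈ Metric.closedBall (0 : K) r) ↔ (b ∈ Metric.closedBall (0 : K) r) := by
    simp only [mem_closedBall_zero_iff]
    constructor
    · intro h
      have h2 := IsUltrametricDist.norm_add_le_max (-a) (a + b)
      rw [neg_add_cancel_left, norm_neg] at h2
      exact h2.trans (max_le ha h)
    · intro h
      exact (IsUltrametricDist.norm_add_le_max a b).trans (max_le ha h)
  by_cases hb : b ∈ Metric.closedBall (0 : K) r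
  · rw [Set.indicator_of_mem hb, Set.indicator_of_mem (this.2 hb)]
  · rw [Set.indicator_of_notMem hb, Set.indicator_of_notMem (fun h => hb (this.1 h))]

lemma cont_int (G : K → ℂ) (hG : Continuous G) (r : ℝ) :
    IntegrableOn G (Metric.closedBall (0 : K) r) μ :=
  hG.continuousOn.integrableOn_compact (isCompact_closedBall _ _)

lemma cont_swap (G : K → K → ℂ) (hG : Continuous (Function.uncurry G)) (r s : ℝ) :
    ∫ a in Metric.closedBall (0 : K) r, ∫ b in Metric.closedBall (0 : K) s, G a b ∂μ ∂μ
     = ∫ b in Metric.closedBall (0 : K) s, ∫ a in Metric.closedBall (0 : K) r, G a b ∂μ ∂μ := by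
  apply integral_integral_swap
  rw [Measure.prod_restrict]
  exact hG.continuousOn.integrableOn_compact
    ((isCompact_closedBall _ _).prod (isCompact_closedBall _ _))

/-- Vanishing of the `(ball r, ψ_y)`-average of `w`. -/
def NullAt (ψ : AddChar K ℂ) (ρ : Rep K V) (w : V) (r : ℝ) (y : K) : Prop :=
  ∀ l : V →ₗ[ℂ] ℂ, ∫ b in Metric.closedBall (0 : K) r, ψ (-(y * b)) * l (ρ (sS b) w) ∂μ = 0

lemma nullAt_of_mem {ψ : AddChar K ℂ} (hψlc : IsLocallyConstant (⇑ψ)) {ρ : Rep K V}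
    (h : SSmooth ρ) (y : K) (w : V) (hw : w ∈ sTwistKer ρ (AddChar.mulShift ψ y)) :
    ∃ R : ℝ, ∀ r, R ≤ r → NullAt μ ψ ρ w r y := by
  have hc : ∀ (v : V) (l : V →ₗ[ℂ] ℂ), Continuous fun b : K => ψ (-(y * b)) * l (ρ (sS b) v) := by
    intro v l
    exact ((psi_cont hψlc).comp (continuous_const.mul continuous_id).neg).mul (h.cont v l)
  unfold sTwistKer at hw
  induction hw using Submodule.span_induction with
  | mem w hw =>
    obtain ⟨a, v, rfl⟩ := hw
    refine ⟨‖a‖, fun r hr l => ?_⟩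
    have e : ∀ b : K, ψ (-(y * b)) * l (ρ (sS b) (ρ (sS a) v - AddChar.mulShift ψ y a • v))
        = ψ (y * a) * (ψ (-(y * (a + b))) * l (ρ (sS (a + b)) v))
          - ψ (y * a) * (ψ (-(y * b)) * l (ρ (sS b) v)) := by
      intro b
      rw [map_sub, map_smul, map_sub, map_smul, ← rho_sS_add, AddChar.mulShift_apply, smul_eq_mul,
        add_comm b a]
      have : ψ (-(y * b)) = ψ (y * a) * ψ (-(y * (a + b))) := by
        rw [← AddChar.map_add_eq_mul]; congr 1; ring
      rw [mul_sub]
      nth_rewrite 1 [this]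
      ring
    simp_rw [e]
    rw [integral_sub]
    · rw [integral_const_mul, integral_const_mul,
        ball_shift μ (fun b => ψ (-(y * b)) * l (ρ (sS b) v)) r a hr, sub_self]
    · exact cont_int μ _ (continuous_const.mul ((hc v l).comp (continuous_const.add continuous_id))) r
    · exact cont_int μ _ (continuous_const.mul (hc v l)) r
  | zero => exact ⟨0, fun r _ l => by simp⟩
  | add v w _ _ hv hw =>
    obtain ⟨R, hR⟩ := hv
    obtain ⟨R', hR'⟩ := hw
    refine ⟨max R R', fun r hr l => ?_⟩
    simp_rw [map_add, mul_add]
    rw [integral_add (cont_int μ _ (hc v l) r) (cont_int μ _ (hc w l) r),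
      hR r ((le_max_left _ _).trans hr) l, hR' r ((le_max_right _ _).trans hr) l, add_zero]
  | smul c v _ hv =>
    obtain ⟨R, hR⟩ := hv
    refine ⟨R, fun r hr l => ?_⟩
    simp_rw [map_smul, smul_eq_mul, mul_left_comm _ c]
    rw [integral_const_mul, hR r hr l, mul_zero]

lemma nullAt_mono {ψ : AddChar K ℂ} (hψlc : IsLocallyConstant (⇑ψ)) {ρ : Rep K V}
    (h : SSmooth ρ) (y : K) (w : V) {r r' : ℝ} (hr : 0 < r) (hrr : r ≤ r')
    (hN : NullAt μ ψ ρ w r y) : NullAt μ ψ ρ w r' y := by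
  intro l
  have hc : Continuous fun b : K => ψ (-(y * b)) * l (ρ (sS b) w) :=
    ((psi_cont hψlc).comp (continuous_const.mul continuous_id).neg).mul (h.cont w l)
  set G : K → ℂ := fun b : K => ψ (-(y * b)) * l (ρ (sS b) w) with hG
  have h1 : ∀ a : K, ∫ b in Metric.closedBall (0 : K) r, G (a + b) ∂μ = 0 := by
    intro a
    have e : ∀ b, G (a + b) = ψ (-(y * a)) * (ψ (-(y * b)) * (l ∘ₗ ρ (sS a)) (ρ (sS b) w)) := by
      intro b
      simp only [hG, LinearMap.comp_apply]
      rw [rho_sS_add, ← mul_assoc, ← AddChar.map_add_eq_mul]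
      congr 2; ring
    simp_rw [e]
    rw [integral_const_mul, hN, mul_zero]
  have h2 := cont_swap μ (fun a b => G (a + b)) (hc.comp (continuous_fst.add continuous_snd)) r' r
  simp only [h1, integral_zero] at h2
  have h3 : ∫ b in Metric.closedBall (0 : K) r, ∫ a in Metric.closedBall (0 : K) r', G (a + b) ∂μ ∂μ
      = ∫ b in Metric.closedBall (0 : K) r, (∫ a in Metric.closedBall (0 : K) r', G a ∂μ) ∂μ := by
    apply setIntegral_congr_fun Metric.isClosed_closedBall.measurableSet
    intro b hb
    simp only
    simp_rw [add_comm _ b]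
    exact ball_shift μ G r' b ((mem_closedBall_zero_iff.1 hb).trans hrr)
  rw [h3, setIntegral_const] at h2
  have h4 : μ.real (Metric.closedBall (0 : K) r) ≠ 0 := by
    rw [measureReal_def, ENNReal.toReal_ne_zero]
    exact ⟨(Metric.measure_closedBall_pos μ 0 hr).ne', (isCompact_closedBall _ _).measure_lt_top.ne⟩
  exact (smul_eq_zero.1 h2.symm).resolve_left h4

lemma nullAt_open {ψ : AddChar K ℂ} (hψlc : IsLocallyConstant (⇑ψ)) (ρ : Rep K V)
    (w : V) {r : ℝ} (hr : 0 < r) : IsOpen {y | NullAt μ ψ ρ w r y} := by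
  obtain ⟨ε, h0, hε⟩ := psi_small hψlc
  rw [Metric.isOpen_iff]
  intro y hy
  refine ⟨ε / r, by positivity, fun y' hy' l => ?_⟩
  rw [← hy l]
  apply setIntegral_congr_fun Metric.isClosed_closedBall.measurableSet
  intro b hb
  simp only
  congr 1
  have : -(y' * b) = -(y * b) + -((y' - y) * b) := by ring
  rw [this, AddChar.map_add_eq_mul, hε (-((y' - y) * b)), mul_one]
  rw [norm_neg, norm_mul]
  rw [Metric.mem_ball, dist_eq_norm, lt_div_iff₀ hr] at hy'
  exact lt_of_le_of_lt (mul_le_mul_of_nonneg_left (mem_closedBall_zero_iff.1 hb) (norm_nonneg _)) hy'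

lemma zero_of_null {ψ : AddChar K ℂ} (hψlc : IsLocallyConstant (⇑ψ)) (hψne : ψ ≠ 1) {ρ : Rep K V}
    (h : SSmooth ρ) (w : V)
    (hw : ∀ y : K, ∃ r : ℝ, 0 < r ∧ NullAt μ ψ ρ w r y) : w = 0 := by
  obtain ⟨c, hc⟩ := psi_ne hψne
  obtain ⟨δ, hδ, hδw⟩ : ∃ δ > 0, ∀ b : K, ‖b‖ < δ → ρ (sS b) w = w := by
    have := (h w).mem_nhds (show (0 : K) ∈ {b : K | ρ (sS b) w = w} by simp [sS_zero])
    obtain ⟨δ, h0, hd⟩ := Metric.mem_nhds_iff.1 this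
    exact ⟨δ, h0, fun b hb => hd (by simpa using hb)⟩
  set R := ‖c‖ / δ with hR
  -- uniform radius on the ball of radius R
  obtain ⟨r, hr0, hr⟩ : ∃ r : ℝ, 0 < r ∧ ∀ y ∈ Metric.closedBall (0 : K) R, NullAt μ ψ ρ w r y := by
    have := (isCompact_closedBall (0 : K) R).elim_directed_cover
      (fun r : {r : ℝ // 0 < r} => {y | NullAt μ ψ ρ w r.1 y})
      (fun r => nullAt_open μ hψlc ρ w r.2)
      (fun y _ => by
        obtain ⟨r, h0, hr⟩ := hw y
        exact Set.mem_iUnion.2 ⟨⟨r, h0⟩, hr⟩)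
      (by
        intro r s
        refine ⟨⟨max r.1 s.1, lt_max_of_lt_left r.2⟩, ?_, ?_⟩
        · exact fun y hy => nullAt_mono μ hψlc h y w r.2 (le_max_left _ _) hy
        · exact fun y hy => nullAt_mono μ hψlc h y w s.2 (le_max_right _ _) hy)
    obtain ⟨r, hr⟩ := this
    exact ⟨r.1, r.2, hr⟩
  by_contra hw0
  obtain ⟨l, hl⟩ := not_forall.1 ((Module.forall_dual_apply_eq_zero_iff ℂ w).not.2 hw0)
  have hcw := h.cont w l
  have hsw := cont_swap μ (fun y b => ψ (-(y * b)) * l (ρ (sS b) w))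
    (((psi_cont hψlc).comp (continuous_fst.mul continuous_snd).neg).mul (hcw.comp continuous_snd)) R r
  have e1 : ∫ y in Metric.closedBall (0 : K) R, ∫ b in Metric.closedBall (0 : K) r,
      ψ (-(y * b)) * l (ρ (sS b) w) ∂μ ∂μ = 0 := by
    rw [setIntegral_congr_fun Metric.isClosed_closedBall.measurableSet
      (fun y hy => hr y hy l)]
    simp
  rw [e1] at hsw
  set A : Set K := {b | ∀ y ∈ Metric.closedBall (0 : K) R, ψ (-(y * b)) = 1} with hA
  have hAcl : IsClosed A := by
    have : A = ⋂ y ∈ Metric.closedBall (0 : K) R, {b | ψ (-(y * b)) = 1} := by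
      ext b; simp [hA]
    rw [this]
    refine isClosed_biInter fun y _ => ?_
    exact isClosed_eq ((psi_cont hψlc).comp (continuous_const.mul continuous_id).neg) continuous_const
  have hAd : ∀ b ∈ A, ρ (sS b) w = w := by
    intro b hb
    apply hδw
    by_contra hbd
    push Not at hbd
    have hb0 : b ≠ 0 := by
      rintro rfl
      simp at hbd
      linarith
    have := hb (-(c / b)) (by
      rw [mem_closedBall_zero_iff, norm_neg, norm_div, hR]
      exact div_le_div_of_nonneg_left (norm_nonneg _) hδ hbd)
    apply hc
    rw [← this]
    congr 1
    field_simp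
  set m := μ.real (Metric.closedBall (0 : K) R) with hm
  have e2 : ∀ b : K, ∫ y in Metric.closedBall (0 : K) R, ψ (-(y * b)) * l (ρ (sS b) w) ∂μ
      = A.indicator (fun _ => (m : ℂ) * l w) b := by
    intro b
    by_cases hb : b ∈ A
    · rw [Set.indicator_of_mem hb]
      rw [setIntegral_congr_fun (g := fun _ => l w) Metric.isClosed_closedBall.measurableSet
        (fun y hy => by simp only; rw [hb y hy, one_mul, hAd b hb])]
      rw [setIntegral_const]
      simp [hm]
    · rw [Set.indicator_of_notMem hb]
      rw [integral_mul_const]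
      simp only [hA, Set.mem_setOf_eq, not_forall] at hb
      obtain ⟨y0, hy0, hne⟩ := hb
      have hs := ball_shift μ (fun y => ψ (-(y * b))) R y0 (mem_closedBall_zero_iff.1 hy0)
      have : ∀ y, ψ (-((y0 + y) * b)) = ψ (-(y0 * b)) * ψ (-(y * b)) := by
        intro y
        rw [← AddChar.map_add_eq_mul]; congr 1; ring
      simp_rw [this] at hs
      rw [integral_const_mul] at hs
      have h5 : (ψ (-(y0 * b)) - 1) * ∫ y in Metric.closedBall (0 : K) R, ψ (-(y * b)) ∂μ = 0 := by
        rw [sub_mul, hs]; ring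
      rw [(mul_eq_zero.1 h5).resolve_left (sub_ne_zero.2 hne), zero_mul]
  simp_rw [e2] at hsw
  rw [setIntegral_indicator hAcl.measurableSet, setIntegral_const] at hsw
  have hR0 : 0 < R := by
    have : c ≠ 0 := by rintro rfl; exact hc (AddChar.map_zero_eq_one ψ)
    have := norm_pos_iff.2 this
    positivity
  have hm0 : m ≠ 0 := by
    rw [hm, measureReal_def, ENNReal.toReal_ne_zero]
    exact ⟨(Metric.measure_closedBall_pos μ 0 hR0).ne', (isCompact_closedBall _ _).measure_lt_top.ne⟩
  have hm1 : μ.real (Metric.closedBall (0 : K) r ∩ A) ≠ 0 := by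
    rw [measureReal_def, ENNReal.toReal_ne_zero]
    refine ⟨?_, ((measure_mono Set.inter_subset_left).trans_lt
      (isCompact_closedBall _ _).measure_lt_top).ne⟩
    obtain ⟨ε, h0, hε⟩ := psi_small hψlc
    have hpos : 0 < min r (ε / (2 * R)) := by positivity
    refine ((Metric.measure_closedBall_pos μ (0 : K) hpos).trans_le (measure_mono ?_)).ne'
    intro b hb
    rw [mem_closedBall_zero_iff] at hb
    refine ⟨mem_closedBall_zero_iff.2 (hb.trans (min_le_left _ _)), fun y hy => ?_⟩
    apply hε
    rw [norm_neg, norm_mul]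
    calc ‖y‖ * ‖b‖ ≤ R * (ε / (2 * R)) := by
          apply mul_le_mul (mem_closedBall_zero_iff.1 hy) (hb.trans (min_le_right _ _))
            (norm_nonneg _) hR0.le
      _ = ε / 2 := by field_simp
      _ < ε := by linarith
  rcases smul_eq_zero.1 hsw.symm with h6 | h6
  · exact hm1 h6
  · rcases mul_eq_zero.1 h6 with h7 | h7
    · exact hm0 (by exact_mod_cast h7)
    · exact hl h7

end Part1

/-- A vector of a smooth `S`-module which dies in all twisted coinvariants is zero. -/
lemma zero_of_mem_all {V : Type*} [AddCommGroup V] [Module ℂ V]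
    {ψ : AddChar K ℂ} (hψlc : IsLocallyConstant (⇑ψ)) (hψne : ψ ≠ 1) {ρ : Rep K V}
    (h : SSmooth ρ) (w : V)
    (hw : ∀ y : K, w ∈ sTwistKer ρ (AddChar.mulShift ψ y)) : w = 0 := by
  let _ : MeasurableSpace K := borel K
  have _ : BorelSpace K := ⟨rfl⟩
  refine zero_of_null (MeasureTheory.Measure.addHaar : MeasureTheory.Measure K) hψlc hψne h w ?_
  intro y
  obtain ⟨R, hR⟩ := nullAt_of_mem MeasureTheory.Measure.addHaar hψlc h y w (hw y)
  exact ⟨max R 1, lt_max_of_lt_right one_pos, hR _ (le_max_left _ _)⟩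


/-! ### Part 2: functions on `k^×`. -/

section Part2

variable {V W : Type*} [AddCommGroup V] [Module ℂ V] [AddCommGroup W] [Module ℂ W]

lemma sTwistKer_le_comap (ρ : Rep K V) (σ : Rep K W) (χ : AddChar K ℂ)
    (f : V →ₗ[ℂ] W) (hf : GRep.Equivariant ρ σ f) :
    sTwistKer ρ χ ≤ (sTwistKer σ χ).comap f := by
  refine Submodule.span_le.2 ?_
  rintro w ⟨b, v, rfl⟩
  simp only [SetLike.mem_coe, Submodule.mem_comap, map_sub, map_smul]
  rw [hf]
  exact Submodule.subset_span ⟨b, f v, rfl⟩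

lemma sTwistKer_zero (ρ : Rep K V) (ψ : AddChar K ℂ) :
    sTwistKer ρ (AddChar.mulShift ψ 0) = sCoinvKer ρ := by
  unfold sTwistKer sCoinvKer
  simp [AddChar.mulShift_apply]

/-- Neighbourhood form of smoothness. -/
def Sm (ρ : Rep K V) : Prop :=
  (∀ v, ∀ᶠ b in nhds (0 : K), ρ (sS b) v = v) ∧ (∀ v, ∀ᶠ u in nhds (1 : Kˣ), ρ (xT u) v = v)

lemma Ssmooth_of {ρ : Rep K V} (h : ∀ v, ∀ᶠ b in nhds (0 : K), ρ (sS b) v = v) : SSmooth ρ := by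
  intro v
  rw [isOpen_iff_mem_nhds]
  intro b hb
  have h1 : ∀ᶠ c : K in nhds (b - b), ρ (sS c) v = v := by
    rw [sub_self]; exact h v
  have h2 : Filter.Tendsto (fun b' : K => b' - b) (nhds b) (nhds (b - b)) :=
    (continuous_id.sub continuous_const).tendsto b
  filter_upwards [h2.eventually h1] with b' hb'
  have : b' = b + (b' - b) := by ring
  rw [this, rho_sS_add, hb']
  exact hb

lemma continuous_sS : Continuous (sS : K → Aff K) := by
  rw [continuous_induced_rng]
  exact continuous_const.prodMk continuous_id

lemma continuous_xT : Continuous (xT : Kˣ → Aff K) := by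
  rw [continuous_induced_rng]
  exact continuous_id.prodMk continuous_const

lemma Sm_of_smooth {ρ : Rep K V} (h : IsSmoothRep ρ) : Sm ρ := by
  constructor
  · intro v
    exact ((h v).preimage continuous_sS).mem_nhds (by simp [sS_zero])
  · intro v
    refine ((h v).preimage continuous_xT).mem_nhds ?_
    have : (xT (1 : Kˣ) : Aff K) = 1 := rfl
    simp [this]

lemma Sm.sub {ρ : Rep K V} (h : Sm ρ) {U : Submodule ℂ V} (hU : GRep.Invariant ρ U) :
    Sm (GRep.sub ρ hU) := by
  constructor
  · intro v
    filter_upwards [h.1 v.1] with b hb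
    exact Subtype.ext hb
  · intro v
    filter_upwards [h.2 v.1] with b hb
    exact Subtype.ext hb

lemma Sm.quot {ρ : Rep K V} (h : Sm ρ) (U : Submodule ℂ V) (hU : GRep.Invariant ρ U) :
    Sm (GRep.quot ρ U hU) := by
  constructor
  · intro v
    obtain ⟨v, rfl⟩ := Submodule.Quotient.mk_surjective U v
    filter_upwards [h.1 v] with b hb
    rw [GRep.quot_apply, hb]
  · intro v
    obtain ⟨v, rfl⟩ := Submodule.Quotient.mk_surjective U v
    filter_upwards [h.2 v] with b hb
    rw [GRep.quot_apply, hb]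

lemma xT_mul (x : Kˣ) (g : Aff K) : xT x * g = sS (g.s * (x : K)) * xT (x * g.t) := by
  ext <;> simp [mul_comm]

lemma lin_twist {ρ : Rep K V} {ψ : AddChar K ℂ} {l : V →ₗ[ℂ] ℂ}
    (hl : sTwistKer ρ ψ ≤ LinearMap.ker l) (b : K) (v : V) : l (ρ (sS b) v) = ψ b * l v := by
  have : l (ρ (sS b) v - ψ b • v) = 0 := hl (Submodule.subset_span ⟨b, v, rfl⟩)
  rw [map_sub, map_smul, sub_eq_zero] at this
  exact this

/-- The Kirillov map of a functional. -/
def kir (ρ : Rep K V) (l : V →ₗ[ℂ] ℂ) : V →ₗ[ℂ] (Kˣ → ℂ) where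
  toFun v x := l (ρ (xT x) v)
  map_add' v w := by funext x; simp
  map_smul' c v := by funext x; simp

lemma kir_equivariant {ρ : Rep K V} {ψ : AddChar K ℂ} {l : V →ₗ[ℂ] ℂ}
    (hl : sTwistKer ρ ψ ≤ LinearMap.ker l) : GRep.Equivariant ρ (repCx K ψ) (kir ρ l) := by
  intro g v
  funext x
  show l (ρ (xT x) (ρ g v)) = ψ (g.s * (x : K)) * l (ρ (xT (x * g.t)) v)
  rw [← lin_twist hl, ← Module.End.mul_apply, ← map_mul, ← Module.End.mul_apply, ← map_mul, xT_mul]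

lemma kir_mem_Cb {ρ : Rep K V} (hs : Sm ρ) {ψ : AddChar K ℂ} (hψne : ψ ≠ 1) {l : V →ₗ[ℂ] ℂ}
    (hl : sTwistKer ρ ψ ≤ LinearMap.ker l) (v : V) : kir ρ l v ∈ Cb K := by
  constructor
  · rw [IsLocallyConstant.iff_eventually_eq]
    intro x
    have h2 : Filter.Tendsto (fun x' : Kˣ => x⁻¹ * x') (nhds x) (nhds 1) := by
      have := (continuous_mul_left x⁻¹).tendsto x
      rwa [inv_mul_cancel] at this
    filter_upwards [h2.eventually (hs.2 v)] with x' hx'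
    show l (ρ (xT x') v) = l (ρ (xT x) v)
    have : (xT x' : Aff K) = xT x * xT (x⁻¹ * x') := by ext <;> simp
    rw [this, map_mul, Module.End.mul_apply, hx']
  · obtain ⟨c, hc⟩ := psi_ne hψne
    obtain ⟨ε, h0, hε⟩ := Metric.eventually_nhds_iff.1 (hs.1 v)
    apply Metric.isCompact_of_isClosed_isBounded isClosed_closure
    apply Bornology.IsBounded.closure
    rw [Metric.isBounded_iff_subset_closedBall 0]
    refine ⟨‖c‖ / ε, ?_⟩
    rintro _ ⟨x, hx, rfl⟩
    rw [mem_closedBall_zero_iff]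
    by_contra hlt
    push Not at hlt
    have hx0 : 0 < ‖(x : K)‖ := norm_pos_iff.2 x.ne_zero
    have h1 : ρ (sS (c / (x : K))) v = v := by
      apply hε
      rw [dist_zero_right, norm_div, div_lt_iff₀ hx0]
      rwa [div_lt_iff₀ h0, mul_comm] at hlt
    have h2 := congrFun (kir_equivariant hl (sS (c / (x : K))) v) x
    rw [h1, repCx_apply] at h2
    simp only [sS_s, sS_t, mul_one] at h2
    rw [div_mul_cancel₀ _ x.ne_zero] at h2
    apply hc
    have h3 : (ψ c - 1) * kir ρ l v x = 0 := by rw [sub_mul, ← h2]; ring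
    exact sub_eq_zero.1 ((mul_eq_zero.1 h3).resolve_right hx)

lemma Cb_sub_mem {ψ : AddChar K ℂ} (hψlc : IsLocallyConstant (⇑ψ)) (f : Kˣ → ℂ) (hf : f ∈ Cb K)
    (b : K) : repCx K ψ (sS b) f - f ∈ SSx K := by
  constructor
  · have : repCx K ψ (sS b) f - f = fun x : Kˣ => (ψ (b * (x : K)) - 1) * f x := by
      funext x; simp [sub_mul]
    rw [this]
    exact ((hψlc.comp_continuous (continuous_const.mul Units.continuous_val)).comp
      (fun z => z - 1)).mul hf.1
  · obtain ⟨ε, h0, hε⟩ := psi_small hψlc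
    set δ := ε / (‖b‖ + 1) with hδ
    have hδ0 : 0 < δ := by positivity
    set C := closure (((↑) : Kˣ → K) '' Function.support f) ∩ {x | δ ≤ ‖x‖} with hC
    have hCc : IsCompact C := hf.2.inter_right (isClosed_le continuous_const continuous_norm)
    have hCr : C ⊆ Set.range ((↑) : Kˣ → K) := by
      intro x hx
      have : x ≠ 0 := norm_pos_iff.1 (hδ0.trans_le hx.2)
      exact ⟨Units.mk0 x this, rfl⟩
    have hpre : IsCompact (((↑) : Kˣ → K) ⁻¹' C) :=
      (Units.isEmbedding_val₀.isInducing.isCompact_preimage_iff hCr).2 hCc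
    refine HasCompactSupport.of_support_subset_isCompact hpre ?_
    intro x hx
    rw [Function.mem_support] at hx
    have hx' : (ψ (b * (x : K)) - 1) * f x ≠ 0 := by
      intro h; apply hx; simpa [sub_mul] using h
    refine ⟨subset_closure ⟨x, right_ne_zero_of_mul hx', rfl⟩, ?_⟩
    show δ ≤ ‖(x : K)‖
    by_contra hlt
    push Not at hlt
    apply left_ne_zero_of_mul hx'
    rw [sub_eq_zero]
    apply hε
    rw [norm_mul]
    rw [hδ, lt_div_iff₀ (by positivity)] at hlt
    nlinarith [norm_nonneg b, norm_nonneg (x : K), norm_pos_iff.2 x.ne_zero]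

lemma SRep_smooth {ψ : AddChar K ℂ} (hψlc : IsLocallyConstant (⇑ψ)) (f : ↥(SSx K)) :
    ∀ᶠ b in nhds (0 : K), SRep ψ hψlc (sS b) f = f := by
  obtain ⟨ε, h0, hε⟩ := psi_small hψlc
  have hcomp : IsCompact (((↑) : Kˣ → K) '' tsupport f.1) := IsCompact.image f.2.2 Units.continuous_val
  obtain ⟨B, hB⟩ := hcomp.isBounded.exists_norm_le
  rw [Metric.eventually_nhds_iff]
  refine ⟨ε / (|B| + 1), by positivity, fun b hb => ?_⟩
  apply Subtype.ext
  funext x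
  show ψ (b * (x : K)) * f.1 (x * 1) = f.1 x
  rw [mul_one]
  by_cases hx : f.1 x = 0
  · rw [hx, mul_zero]
  · rw [hε, one_mul]
    have h1 := hB (x : K) ⟨x, subset_closure hx, rfl⟩
    rw [dist_zero_right, lt_div_iff₀ (by positivity)] at hb
    rw [norm_mul]
    have := le_abs_self B
    nlinarith [norm_nonneg b]

/-- An element of `𝕊` vanishing at `a` dies in the `ψ_a`-coinvariants of `𝕊`. -/
lemma SSx_mem_twist {ψ : AddChar K ℂ} (hψlc : IsLocallyConstant (⇑ψ)) (hψne : ψ ≠ 1) (a : K)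
    (f : ↥(SSx K)) (hf : ∀ x : Kˣ, (x : K) = a → f.1 x = 0) :
    f ∈ sTwistKer (SRep ψ hψlc) (AddChar.mulShift ψ a) := by
  obtain ⟨c, hc⟩ := psi_ne hψne
  have key : ∃ O : Set Kˣ, IsClopen O ∧ tsupport f.1 ⊆ O ∧
      ∀ g : ↥(SSx K), (∀ x, x ∉ O → g.1 x = 0) →
        g ∈ sTwistKer (SRep ψ hψlc) (AddChar.mulShift ψ a) := by
    refine IsCompact.induction_on (p := fun s => ∃ O : Set Kˣ, IsClopen O ∧ s ⊆ O ∧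
      ∀ g : ↥(SSx K), (∀ x, x ∉ O → g.1 x = 0) →
        g ∈ sTwistKer (SRep ψ hψlc) (AddChar.mulShift ψ a)) f.2.2 ?_ ?_ ?_ ?_
    · refine ⟨∅, isClopen_empty, subset_rfl, fun g hg => ?_⟩
      have : g = 0 := by
        apply Subtype.ext; funext x; exact hg x (by simp)
      rw [this]; exact Submodule.zero_mem _
    · rintro s t hst ⟨O, h1, h2, h3⟩
      exact ⟨O, h1, hst.trans h2, h3⟩
    · rintro s t ⟨O, h1, h2, h3⟩ ⟨O', h1', h2', h3'⟩
      refine ⟨O ∪ O', h1.union h1', Set.union_subset_union h2 h2', fun g hg => ?_⟩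
      have hlc : IsLocallyConstant (O.indicator g.1) :=
        (LocallyConstant.indicator ⟨g.1, g.2.1⟩ h1).isLocallyConstant
      have hmem : O.indicator g.1 ∈ SSx K := by
        refine ⟨hlc, g.2.2.mono ?_⟩
        intro x hx
        rw [Function.mem_support] at hx ⊢
        intro h0; apply hx
        by_cases hxO : x ∈ O
        · rw [Set.indicator_of_mem hxO, h0]
        · rw [Set.indicator_of_notMem hxO]
      have e : g = ⟨O.indicator g.1, hmem⟩ + (g - ⟨O.indicator g.1, hmem⟩) := by abel
      rw [e]
      refine Submodule.add_mem _ (h3 _ ?_) (h3' _ ?_)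
      · intro x hx; exact Set.indicator_of_notMem hx _
      · intro x hx
        show g.1 x - O.indicator g.1 x = 0
        by_cases hxO : x ∈ O
        · rw [Set.indicator_of_mem hxO, sub_self]
        · rw [Set.indicator_of_notMem hxO, hg x (by simp [hxO, hx]), sub_zero]
    · intro x0 hx0
      have hx0f : f.1 x0 ≠ 0 := by
        have hcl : IsClosed (Function.support f.1) := 
          (f.2.1.isOpen_fiber 0).isClosed_compl
        have : x0 ∈ Function.support f.1 := by
          rw [← hcl.closure_eq]; exact hx0
        exact this
      have hne : (x0 : K) - a ≠ 0 := fun h => hx0f (hf x0 (sub_eq_zero.1 h))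
      set b := c / ((x0 : K) - a) with hb
      have hbne : ψ (b * (x0 : K)) - ψ (a * b) ≠ 0 := by
        intro h
        apply hc
        have e1 : c = b * (x0 : K) + -(a * b) := by rw [hb]; field_simp; ring
        rw [e1, AddChar.map_add_eq_mul, sub_eq_zero.1 h, ← AddChar.map_add_eq_mul,
          add_neg_cancel, AddChar.map_zero_eq_one]
      have hlcb : IsLocallyConstant (fun x : Kˣ => ψ (b * (x : K))) :=
        hψlc.comp_continuous (continuous_const.mul Units.continuous_val)
      set O : Set Kˣ := {x | ψ (b * (x : K)) = ψ (b * (x0 : K))} with hO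
      have hOc : IsClopen O := hlcb.isClopen_fiber _
      refine ⟨O, mem_nhdsWithin_of_mem_nhds (hOc.isOpen.mem_nhds rfl), O, hOc, subset_rfl, ?_⟩
      intro g hg
      have e2 : g = (ψ (b * (x0 : K)) - ψ (a * b))⁻¹ •
          (SRep ψ hψlc (sS b) g - AddChar.mulShift ψ a b • g) := by
        apply Subtype.ext
        funext x
        show g.1 x = (ψ (b * (x0 : K)) - ψ (a * b))⁻¹ *
          (ψ (b * (x : K)) * g.1 (x * 1) - ψ (a * b) * g.1 x)
        rw [mul_one]
        by_cases hx : x ∈ O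
        · have : ψ (b * (x : K)) = ψ (b * (x0 : K)) := hx
          rw [this, ← sub_mul, inv_mul_cancel_left₀ hbne]
        · rw [hg x hx]; simp
      rw [e2]
      exact Submodule.smul_mem _ _ (Submodule.subset_span ⟨b, g, rfl⟩)
  obtain ⟨O, -, hO, h⟩ := key
  refine h f fun x hx => ?_
  by_contra hfx
  exact hx (hO (subset_closure hfx))

/-- Every nonzero submodule of `C_b^∞(k^×)` contains `𝕊`, and `𝕊` is then nonzero. -/
lemma SSx_le {ψ : AddChar K ℂ} (hψlc : IsLocallyConstant (⇑ψ)) (hψne : ψ ≠ 1)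
    (N : Submodule ℂ (Kˣ → ℂ)) (hN : GRep.Invariant (repCx K ψ) N) (hNC : N ≤ Cb K) (hN0 : N ≠ ⊥) :
    SSx K ≤ N ∧ SSx K ≠ ⊥ := by
  obtain ⟨c, hc⟩ := psi_ne hψne
  obtain ⟨f, hfN, hf0⟩ := N.ne_bot_iff.1 hN0
  obtain ⟨x0, hx0⟩ := Function.ne_iff.1 hf0
  set g := repCx K ψ (sS (c / (x0 : K))) f - f with hg
  have hgN : g ∈ N := N.sub_mem (hN _ _ hfN) hfN
  have hgS : g ∈ SSx K := Cb_sub_mem hψlc f (hNC hfN) _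
  have hgx : g x0 ≠ 0 := by
    show ψ (c / (x0 : K) * (x0 : K)) * f (x0 * 1) - f x0 ≠ 0
    rw [div_mul_cancel₀ _ x0.ne_zero, mul_one]
    intro h
    have h3 : (ψ c - 1) * f x0 = 0 := by rw [sub_mul, one_mul, h]
    exact (mul_ne_zero (sub_ne_zero.2 hc) hx0) h3
  refine ⟨?_, fun h => hgx (by rw [h] at hgS; rw [(Submodule.mem_bot ℂ).1 hgS]; rfl)⟩
  set U : Submodule ℂ ↥(SSx K) := N.comap (SSx K).subtype with hU
  have hUinv : GRep.Invariant (SRep ψ hψlc) U := fun γ v hv => hN γ v.1 hv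
  have hsm : SSmooth (GRep.quot (SRep ψ hψlc) U hUinv) := by
    apply Ssmooth_of
    intro v
    obtain ⟨v, rfl⟩ := Submodule.Quotient.mk_surjective U v
    filter_upwards [SRep_smooth hψlc v] with b hb
    rw [GRep.quot_apply, hb]
  intro h hh
  have h0 : (U.mkQ ⟨h, hh⟩) = 0 := by
    apply zero_of_mem_all hψlc hψne hsm
    intro y
    -- find an element of U with the same value at y
    obtain ⟨k, hkU, hk⟩ : ∃ k ∈ U, ∀ x : Kˣ, (x : K) = y → (⟨h, hh⟩ - k : ↥(SSx K)).1 x = 0 := by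
      by_cases hy : y = 0
      · refine ⟨0, U.zero_mem, fun x hx => ?_⟩
        exact absurd (hx.trans hy) x.ne_zero
      · set yu := Units.mk0 y hy
        set t : ↥(SSx K) := SRep ψ hψlc (xT (yu⁻¹ * x0)) ⟨g, hgS⟩ with ht
        have htU : t ∈ U := hUinv _ _ hgN
        have hty : t.1 yu = g x0 := by
          show ψ (0 * (yu : K)) * g (yu * (yu⁻¹ * x0)) = g x0
          rw [zero_mul, AddChar.map_zero_eq_one, one_mul, mul_inv_cancel_left]
        refine ⟨(h yu / g x0) • t, U.smul_mem _ htU, fun x hx => ?_⟩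
        have : x = yu := Units.ext hx
        subst this
        show h yu - (h yu / g x0) * t.1 yu = 0
        rw [hty, div_mul_cancel₀ _ hgx, sub_self]
    have h1 := SSx_mem_twist hψlc hψne y _ hk
    have h2 := sTwistKer_le_comap _ _ (AddChar.mulShift ψ y) _
      (GRep.mkQ_equivariant (SRep ψ hψlc) U hUinv) h1
    rw [Submodule.mem_comap, map_sub] at h2
    have h3 : U.mkQ k = 0 := (Submodule.Quotient.mk_eq_zero U).2 hkU
    rwa [h3, sub_zero] at h2
  exact (Submodule.Quotient.mk_eq_zero U).1 h0

end Part2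


/-! ### Part 3: multiplicity one and the Kirillov embedding. -/

section Part3

variable {V W : Type*} [AddCommGroup V] [Module ℂ V] [AddCommGroup W] [Module ℂ W]

lemma twist_top_or_iso {ψ : AddChar K ℂ} (hψlc : IsLocallyConstant (⇑ψ)) (hψne : ψ ≠ 1)
    {ρ : Rep K V} (hs : Sm ρ)
    (hirr : ∀ U : Submodule ℂ V, GRep.Invariant ρ U → U = ⊥ ∨ U = ⊤) :
    sTwistKer ρ ψ = ⊤ ∨ GRep.Iso ρ (SRep ψ hψlc) := by
  by_cases htop : sTwistKer ρ ψ = ⊤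
  · exact Or.inl htop
  right
  obtain ⟨l, hl0, hl⟩ := Submodule.exists_le_ker_of_lt_top _ (lt_top_iff_ne_top.2 htop)
  have heq := kir_equivariant hl
  obtain ⟨v, hv⟩ : ∃ v, l v ≠ 0 := by
    by_contra hcon
    push Not at hcon
    exact hl0 (LinearMap.ext hcon)
  have hkv : kir ρ l v ≠ 0 := by
    intro h
    apply hv
    have := congrFun h 1
    have h1 : (xT (1 : Kˣ) : Aff K) = 1 := rfl
    change l (ρ (xT 1) v) = 0 at this
    rwa [h1, map_one] at this
  have hker : LinearMap.ker (kir ρ l) = ⊥ := by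
    rcases hirr _ (GRep.ker_invariant _ _ _ heq) with h | h
    · exact h
    · exfalso
      apply hkv
      have : v ∈ LinearMap.ker (kir ρ l) := by rw [h]; trivial
      exact this
  have hle : LinearMap.range (kir ρ l) ≤ Cb K := by
    rintro _ ⟨w, rfl⟩; exact kir_mem_Cb hs hψne hl w
  obtain ⟨hS, hS0⟩ := SSx_le hψlc hψne _ (GRep.range_invariant _ _ _ heq) hle
    (fun h => hkv (by
      have : kir ρ l v ∈ LinearMap.range (kir ρ l) := ⟨v, rfl⟩
      rw [h] at this
      exact (Submodule.mem_bot ℂ).1 this))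
  have hcomap : (SSx K).comap (kir ρ l) = ⊤ := by
    rcases hirr ((SSx K).comap (kir ρ l)) (fun g w hw => by
      rw [Submodule.mem_comap, heq]; exact SSx_invariant ψ hψlc g _ hw) with h | h
    · exfalso
      apply hS0
      rw [eq_bot_iff]
      intro f hf
      obtain ⟨w, hw⟩ := hS hf
      have : w ∈ (SSx K).comap (kir ρ l) := by rw [Submodule.mem_comap, hw]; exact hf
      rw [h, Submodule.mem_bot] at this
      rw [← hw, this, map_zero]
      exact Submodule.zero_mem _
    · exact h
  have hmem : ∀ w, kir ρ l w ∈ SSx K := fun w => by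
    have : w ∈ (SSx K).comap (kir ρ l) := by rw [hcomap]; trivial
    exact this
  refine ⟨LinearEquiv.ofBijective ((kir ρ l).codRestrict (SSx K) hmem) ⟨?_, ?_⟩, ?_⟩
  · intro a b hab
    exact LinearMap.ker_eq_bot.1 hker (congrArg Subtype.val hab)
  · rintro ⟨f, hf⟩
    obtain ⟨w, hw⟩ := hS hf
    exact ⟨w, Subtype.ext hw⟩
  · intro g w
    apply Subtype.ext
    exact heq g w

lemma mem_of_subquot (ρ : Rep K V) (χ : AddChar K ℂ) {A B : Submodule ℂ V}
    (hA : GRep.Invariant ρ A) (hB : GRep.Invariant ρ B) (x : ↥B)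
    (hx : (Submodule.Quotient.mk x : ↥B ⧸ A.comap B.subtype) ∈ sTwistKer (GRep.subquot ρ hA hB) χ) :
    x.1 ∈ A ⊔ sTwistKer ρ χ := by
  set φ : (↥B ⧸ A.comap B.subtype) →ₗ[ℂ] V ⧸ (A ⊔ sTwistKer ρ χ) :=
    (A.comap B.subtype).liftQ ((A ⊔ sTwistKer ρ χ).mkQ ∘ₗ B.subtype) (by
      intro y hy
      rw [LinearMap.mem_ker]
      exact (Submodule.Quotient.mk_eq_zero _).2 (Submodule.mem_sup_left hy)) with hφ
  have hle : sTwistKer (GRep.subquot ρ hA hB) χ ≤ LinearMap.ker φ := by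
    refine Submodule.span_le.2 ?_
    rintro _ ⟨b, v, rfl⟩
    obtain ⟨v, rfl⟩ := Submodule.Quotient.mk_surjective _ v
    rw [SetLike.mem_coe, LinearMap.mem_ker]
    show (Submodule.Quotient.mk (ρ (sS b) v.1 - χ b • v.1) : V ⧸ (A ⊔ sTwistKer ρ χ)) = 0
    rw [Submodule.Quotient.mk_eq_zero]
    exact Submodule.mem_sup_right (Submodule.subset_span ⟨b, v.1, rfl⟩)
  have := hle hx
  rw [LinearMap.mem_ker] at this
  exact (Submodule.Quotient.mk_eq_zero _).1 this

lemma subquot_irr {ρ : Rep K V} (c : CompSeries ρ) (i : ℕ) (hi : i < c.n)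
    (U : Submodule ℂ (↥(c.W (i + 1)) ⧸ (c.W i).comap (c.W (i + 1)).subtype))
    (hU : GRep.Invariant (GRep.subquot ρ (c.inv i) (c.inv (i + 1))) U) : U = ⊥ ∨ U = ⊤ := by
  set q := ((c.W i).comap (c.W (i + 1)).subtype).mkQ with hq
  set C : Submodule ℂ V := (U.comap q).map (c.W (i + 1)).subtype with hC
  have hCi : GRep.Invariant ρ C := by
    rintro g _ ⟨v, hv, rfl⟩
    refine ⟨GRep.sub ρ (c.inv (i + 1)) g v, ?_, rfl⟩
    exact hU g _ hv
  have hlt := (c.lt i hi).le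
  have h1 : c.W i ≤ C := by
    intro v hv
    refine ⟨⟨v, hlt hv⟩, ?_, rfl⟩
    have : q ⟨v, hlt hv⟩ = 0 := (Submodule.Quotient.mk_eq_zero _).2 hv
    show q ⟨v, hlt hv⟩ ∈ U
    rw [this]; exact U.zero_mem
  have h2 : C ≤ c.W (i + 1) := by
    rintro _ ⟨v, hv, rfl⟩; exact v.2
  rcases c.maximal i hi C hCi h1 h2 with h | h
  · left
    rw [eq_bot_iff]
    intro x hx
    obtain ⟨x, rfl⟩ := Submodule.Quotient.mk_surjective _ x
    rw [Submodule.mem_bot, Submodule.Quotient.mk_eq_zero]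
    show x.1 ∈ c.W i
    rw [← h]
    exact ⟨x, hx, rfl⟩
  · right
    rw [eq_top_iff]
    intro x _
    obtain ⟨x, rfl⟩ := Submodule.Quotient.mk_surjective _ x
    have : x.1 ∈ C := by rw [h]; exact x.2
    obtain ⟨y, hy, hyx⟩ := this
    have : y = x := Subtype.ext hyx
    rw [← this]; exact hy

lemma step_not {ψ : AddChar K ℂ} (hψlc : IsLocallyConstant (⇑ψ)) (hψne : ψ ≠ 1)
    {ρ : Rep K V} (hs : Sm ρ) (c : CompSeries ρ) (i : ℕ) (hi : i < c.n)
    (hn : ¬ GRep.Iso (GRep.subquot ρ (c.inv i) (c.inv (i + 1))) (SRep ψ hψlc)) :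
    c.W (i + 1) ≤ c.W i ⊔ sTwistKer ρ ψ := by
  have h := (twist_top_or_iso hψlc hψne (ρ := GRep.subquot ρ (c.inv i) (c.inv (i + 1)))
    ((hs.sub (c.inv (i + 1))).quot _ _) (subquot_irr c i hi)).resolve_right hn
  intro x hx
  refine mem_of_subquot ρ ψ (c.inv i) (c.inv (i + 1)) ⟨x, hx⟩ ?_
  rw [h]; trivial

lemma step_iso {ψ : AddChar K ℂ} (hψlc : IsLocallyConstant (⇑ψ)) (hψne : ψ ≠ 1)
    {ρ : Rep K V} (c : CompSeries ρ) (i : ℕ)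
    (hn : GRep.Iso (GRep.subquot ρ (c.inv i) (c.inv (i + 1))) (SRep ψ hψlc)) :
    ∃ v, c.W (i + 1) ≤ c.W i ⊔ sTwistKer ρ ψ ⊔ Submodule.span ℂ {v} := by
  obtain ⟨e, he⟩ := hn
  have hsymm : GRep.Equivariant (SRep ψ hψlc) (GRep.subquot ρ (c.inv i) (c.inv (i + 1)))
      e.symm.toLinearMap := by
    intro g f
    apply e.injective
    rw [he]
    simp
  have key : ∀ x : ↥(c.W (i + 1)), (e (Submodule.Quotient.mk x)).1 1 = 0 →
      x.1 ∈ c.W i ⊔ sTwistKer ρ ψ := by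
    intro x hx
    apply mem_of_subquot ρ ψ (c.inv i) (c.inv (i + 1)) x
    have h1 := SSx_mem_twist hψlc hψne 1 (e (Submodule.Quotient.mk x)) (by
      intro y hy
      have : y = 1 := Units.ext hy
      rw [this, hx])
    rw [AddChar.mulShift_one] at h1
    have h2 := sTwistKer_le_comap _ _ ψ _ hsymm h1
    rw [Submodule.mem_comap] at h2
    simpa using h2
  by_cases h0 : ∀ x : ↥(c.W (i + 1)), (e (Submodule.Quotient.mk x)).1 1 = 0
  · exact ⟨0, fun x hx => Submodule.mem_sup_left (key ⟨x, hx⟩ (h0 _))⟩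
  · push Not at h0
    obtain ⟨v, hv⟩ := h0
    refine ⟨v.1, fun x hx => ?_⟩
    set t : ℂ := (e (Submodule.Quotient.mk ⟨x, hx⟩)).1 1 / (e (Submodule.Quotient.mk v)).1 1 with ht
    have h3 := key (⟨x, hx⟩ - t • v) (by
      rw [Submodule.Quotient.mk_sub, Submodule.Quotient.mk_smul, map_sub, map_smul]
      show (e (Submodule.Quotient.mk ⟨x, hx⟩)).1 1 - t * (e (Submodule.Quotient.mk v)).1 1 = 0
      rw [ht, div_mul_cancel₀ _ hv, sub_self])
    have e3 : x = (x - t • v.1) + t • v.1 := by abel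
    rw [e3]
    exact Submodule.add_mem_sup h3 (Submodule.smul_mem _ _ (Submodule.mem_span_singleton_self _))

lemma twist_codim {ψ : AddChar K ℂ} (hψlc : IsLocallyConstant (⇑ψ)) (hψne : ψ ≠ 1)
    {ρ : Rep K V} (hs : Sm ρ) (c : CompSeries ρ) (hdeg : c.deg (SRep ψ hψlc) = 1) :
    ∃ v, sTwistKer ρ ψ ⊔ Submodule.span ℂ {v} = ⊤ := by
  unfold CompSeries.deg at hdeg
  rw [Finset.card_eq_one] at hdeg
  obtain ⟨i0, hi0⟩ := hdeg
  have hiff : ∀ i : Fin c.n, GRep.Iso (GRep.subquot ρ (c.inv i.1) (c.inv (i.1 + 1))) (SRep ψ hψlc)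
      ↔ i = i0 := by
    intro i
    have := Finset.ext_iff.1 hi0 i
    simpa using this
  obtain ⟨v, hv⟩ := step_iso hψlc hψne c i0.1 ((hiff i0).2 rfl)
  refine ⟨v, ?_⟩
  have key : ∀ i, i ≤ c.n → c.W i ≤ sTwistKer ρ ψ ⊔ Submodule.span ℂ {v} := by
    intro i
    induction i with
    | zero => intro _; rw [c.bot]; exact bot_le
    | succ i ih =>
      intro hi
      have ih := ih (by omega)
      by_cases h : i = i0.1
      · subst h
        refine hv.trans ?_
        rw [sup_assoc]
        exact sup_le ih le_rfl
      · refine (step_not hψlc hψne hs c i (by omega) ?_).trans (sup_le ih le_sup_left)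
        intro hcon
        apply h
        exact congrArg Fin.val ((hiff ⟨i, by omega⟩).1 hcon)
  rw [eq_top_iff, ← c.top]
  exact key _ le_rfl

/-- A nonzero finite-dimensional module over `T` has an eigenvector. -/
lemma exists_eigen (τ : Representation ℂ Kˣ V) (d : ℕ) : ∀ F : Submodule ℂ V,
    GRep.Invariant τ F → F ≠ ⊥ → Module.Finite ℂ F → Module.finrank ℂ F ≤ d →
    ∃ v, v ≠ 0 ∧ ∃ χ : Kˣ →* ℂˣ, ∀ u, τ u v = (χ u : ℂ) • v := by
  induction d with
  | zero =>
    intro F _ hF _ hd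
    exact absurd (Submodule.finrank_eq_zero.1 (Nat.le_zero.1 hd)) hF
  | succ d ih =>
    intro F hinv hF hfin hd
    by_cases hscal : ∀ u : Kˣ, ∃ c : ℂ, ∀ v ∈ F, τ u v = c • v
    · choose c hc using hscal
      obtain ⟨v, hvF, hv⟩ := F.ne_bot_iff.1 hF
      refine ⟨v, hv, MonoidHom.toHomUnits
        { toFun := c, map_one' := ?_, map_mul' := ?_ }, fun u => hc u v hvF⟩
      · have := hc 1 v hvF
        rw [map_one, Module.End.one_apply] at this
        have h2 : (c 1 - 1) • v = 0 := by rw [sub_smul, ← this, one_smul, sub_self]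
        exact sub_eq_zero.1 ((smul_eq_zero.1 h2).resolve_right hv)
      · intro a b
        have := hc (a * b) v hvF
        rw [map_mul, Module.End.mul_apply, hc b v hvF, map_smul, hc a v hvF, smul_smul,
          mul_comm] at this
        have h2 : (c a * c b - c (a * b)) • v = 0 := by rw [sub_smul, ← this, sub_self]
        exact (sub_eq_zero.1 ((smul_eq_zero.1 h2).resolve_right hv)).symm
    · push Not at hscal
      obtain ⟨u, hu⟩ := hscal
      have hnt : Nontrivial F := Submodule.nontrivial_iff_ne_bot.2 hF
      obtain ⟨c, hc⟩ := Module.End.exists_eigenvalue ((τ u).restrict (fun v hv => hinv u v hv) : Module.End ℂ F)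
      obtain ⟨w, hw⟩ := hc.exists_hasEigenvector
      have hw1 : τ u w.1 = c • w.1 := congrArg Subtype.val hw.apply_eq_smul
      set F' : Submodule ℂ V := F ⊓ LinearMap.ker (τ u - c • LinearMap.id) with hF'
      have hmem : ∀ v, v ∈ F' ↔ v ∈ F ∧ τ u v = c • v := by
        intro v
        simp [hF', sub_eq_zero]
      have hlt : F' < F := by
        refine lt_of_le_of_ne inf_le_left fun h => ?_
        obtain ⟨v, hvF, hv⟩ := hu c
        rw [← h] at hvF
        exact hv ((hmem v).1 hvF).2
      refine ih F' ?_ ?_ (Submodule.finiteDimensional_of_le inf_le_left) ?_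
      · intro g v hv
        rw [hmem] at hv ⊢
        refine ⟨hinv g v hv.1, ?_⟩
        rw [← Module.End.mul_apply, ← map_mul, mul_comm, map_mul, Module.End.mul_apply, hv.2, map_smul]
      · rw [Submodule.ne_bot_iff]
        refine ⟨w.1, (hmem _).2 ⟨w.2, hw1⟩, fun h => hw.2 (Subtype.ext h)⟩
      · have := Submodule.finrank_lt_finrank_of_lt hlt
        omega

lemma sInv_eq_bot {ψ : AddChar K ℂ} (hψlc : IsLocallyConstant (⇑ψ)) (hψne : ψ ≠ 1)
    {ρ : Rep K V} (hsm : IsSmoothRep ρ) (hperf : Perfect ρ)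
    (hfin : Module.Finite ℂ (V ⧸ sCoinvKer ρ)) : sInv ρ = ⊥ := by
  have hs := Sm_of_smooth hsm
  obtain ⟨c, hc⟩ := psi_ne hψne
  have hinter : ∀ v ∈ sInv ρ, v ∈ sCoinvKer ρ → v = 0 := by
    intro v hv hv0
    apply zero_of_mem_all hψlc hψne (Ssmooth_of hs.1)
    intro y
    by_cases hy : y = 0
    · rw [hy, sTwistKer_zero]; exact hv0
    · have h1 : ρ (sS (c / y)) v - AddChar.mulShift ψ y (c / y) • v
          ∈ sTwistKer ρ (AddChar.mulShift ψ y) := Submodule.subset_span ⟨_, _, rfl⟩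
      rw [hv, AddChar.mulShift_apply, mul_div_cancel₀ _ hy] at h1
      have h2 : v = (1 - ψ c)⁻¹ • (v - ψ c • v) := by
        have : v - ψ c • v = (1 - ψ c) • v := by rw [sub_smul, one_smul]
        rw [this, smul_smul, inv_mul_cancel₀ (sub_ne_zero.2 (Ne.symm hc)), one_smul]
      rw [h2]
      exact Submodule.smul_mem _ _ h1
  by_contra hne
  have hfs : Module.Finite ℂ (sInv ρ) := by
    refine Module.Finite.of_injective ((sCoinvKer ρ).mkQ ∘ₗ (sInv ρ).subtype) ?_
    rw [← LinearMap.ker_eq_bot, eq_bot_iff]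
    intro v hv
    rw [Submodule.mem_bot]
    apply Subtype.ext
    exact hinter v.1 v.2 ((Submodule.Quotient.mk_eq_zero _).1 hv)
  obtain ⟨v, hv0, χ, hχ⟩ := exists_eigen (ρ.comp xTHom) _ (sInv ρ)
    (fun u v hv => sInv_invariant ρ (xT u) v hv) hne hfs le_rfl
  have hsmχ : SmoothMulChar χ := by
    have h1 := (hsm v).preimage continuous_xT
    suffices h0 : {u : Kˣ | χ u = 1} = xT ⁻¹' {g : Aff K | ρ g v = v} by
      unfold SmoothMulChar
      rw [h0]
      exact h1
    ext u
    simp only [Set.mem_setOf_eq, Set.mem_preimage]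
    have h2 : ρ (xT u) v = (χ u : ℂ) • v := hχ u
    rw [h2]
    constructor
    · intro h; simp [h]
    · intro h
      have h3 : ((χ u : ℂ) - 1) • v = 0 := by rw [sub_smul, h, one_smul, sub_self]
      exact Units.ext (sub_eq_zero.1 ((smul_eq_zero.1 h3).resolve_right hv0))
  have := hperf χ hsmχ
  have h4 : v ∈ tEigen ρ χ := hχ
  rw [this, Submodule.mem_bot] at h4
  exact hv0 h4

/-- The Kirillov embedding. -/
lemma exists_embedding {ψ : AddChar K ℂ} (hψlc : IsLocallyConstant (⇑ψ)) (hψne : ψ ≠ 1)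
    {ρ : Rep K V} (hsm : IsSmoothRep ρ) (hperf : Perfect ρ)
    (hfin : Module.Finite ℂ (V ⧸ sCoinvKer ρ))
    (c : CompSeries ρ) (hdeg : c.deg (SRep ψ hψlc) = 1) :
    ∃ k : V →ₗ[ℂ] (Kˣ → ℂ), Function.Injective k ∧ GRep.Equivariant ρ (repCx K ψ) k ∧
      ∀ v, k v ∈ Cb K := by
  have hs := Sm_of_smooth hsm
  obtain ⟨v0, hv0⟩ := twist_codim hψlc hψne hs c hdeg
  obtain ⟨l, hl⟩ : ∃ l : V →ₗ[ℂ] ℂ, LinearMap.ker l = sTwistKer ρ ψ := by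
    by_cases htop : sTwistKer ρ ψ = ⊤
    · exact ⟨0, by rw [htop, LinearMap.ker_zero]⟩
    · obtain ⟨l, hl0, hl⟩ := Submodule.exists_le_ker_of_lt_top _ (lt_top_iff_ne_top.2 htop)
      refine ⟨l, le_antisymm ?_ hl⟩
      have hlv : l v0 ≠ 0 := by
        intro h
        apply hl0
        rw [← LinearMap.ker_eq_top, eq_top_iff, ← hv0]
        refine sup_le hl ?_
        rw [Submodule.span_singleton_le_iff_mem]
        exact h
      intro v hv
      have : v ∈ sTwistKer ρ ψ ⊔ Submodule.span ℂ {v0} := by rw [hv0]; trivial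
      obtain ⟨a, ha, b, hb, rfl⟩ := Submodule.mem_sup.1 this
      obtain ⟨t, rfl⟩ := Submodule.mem_span_singleton.1 hb
      rw [LinearMap.mem_ker, map_add, LinearMap.mem_ker.1 (hl ha), zero_add, map_smul,
        smul_eq_mul] at hv
      have ht := (mul_eq_zero.1 hv).resolve_right hlv
      rw [ht, zero_smul, add_zero]
      exact ha
  have heq := kir_equivariant hl.ge
  refine ⟨kir ρ l, ?_, heq, fun v => kir_mem_Cb hs hψne hl.ge v⟩
  have hk : ∀ v, kir ρ l v = 0 → v ∈ sCoinvKer ρ → v = 0 := by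
    intro v hv hv0
    apply zero_of_mem_all hψlc hψne (Ssmooth_of hs.1)
    intro y
    by_cases hy : y = 0
    · rw [hy, sTwistKer_zero]; exact hv0
    · set u := Units.mk0 y hy with hu
      have h1 : ρ (xT u) v ∈ sTwistKer ρ ψ := by
        rw [← hl]; exact congrFun hv u
      have h2 : sTwistKer ρ ψ ≤ (sTwistKer ρ (AddChar.mulShift ψ y)).comap (ρ (xT u⁻¹)) := by
        refine Submodule.span_le.2 ?_
        rintro w ⟨b, v', rfl⟩
        simp only [SetLike.mem_coe, Submodule.mem_comap, map_sub, map_smul]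
        have h3 : ρ (xT u⁻¹) (ρ (sS b) v') = ρ (sS (y⁻¹ * b)) (ρ (xT u⁻¹) v') := by
          rw [← Module.End.mul_apply, ← map_mul, mul_sS, map_mul, Module.End.mul_apply]
          simp [hu]
        rw [h3]
        refine Submodule.subset_span ⟨y⁻¹ * b, ρ (xT u⁻¹) v', ?_⟩
        rw [AddChar.mulShift_apply, mul_inv_cancel_left₀ hy]
      have h4 := h2 h1
      rw [Submodule.mem_comap, ← Module.End.mul_apply, ← map_mul] at h4
      have h5 : (xT u⁻¹ * xT u : Aff K) = 1 := by ext <;> simp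
      rwa [h5, map_one] at h4
  rw [← LinearMap.ker_eq_bot, eq_bot_iff]
  rw [← sInv_eq_bot hψlc hψne hsm hperf hfin]
  intro v hv b
  have := hk (ρ (sS b) v - v) (by
    rw [map_sub, LinearMap.mem_ker.1 hv, LinearMap.mem_ker.1 (GRep.ker_invariant _ _ _ heq (sS b) v hv),
      sub_zero]) (Submodule.subset_span ⟨b, v, rfl⟩)
  exact sub_eq_zero.1 this

end Part3


/-! ### Part 4: composition series of submodules of `C_b`. -/

section Part4

variable {V W : Type*} [AddCommGroup V] [Module ℂ V] [AddCommGroup W] [Module ℂ W]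

lemma map_ne_bot (f : V →ₗ[ℂ] W) (hf : Function.Injective f) (U : Submodule ℂ V) (hU : U ≠ ⊥) :
    U.map f ≠ ⊥ := by
  obtain ⟨v, hv, hv0⟩ := (Submodule.ne_bot_iff _).1 hU
  refine (Submodule.ne_bot_iff _).2 ⟨f v, ⟨v, hv, rfl⟩, fun h => hv0 (hf ?_)⟩
  rw [h, map_zero]

lemma subquot_bot_iso (ρ : Rep K V) (σ : Rep K W) {A B : Submodule ℂ V}
    (hA : GRep.Invariant ρ A) (hB : GRep.Invariant ρ B) (F : ↥B →ₗ[ℂ] W)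
    (hk : A.comap B.subtype = LinearMap.ker F) (hs : Function.Surjective F)
    (hF : GRep.Equivariant (GRep.sub ρ hB) σ F) :
    GRep.Iso (GRep.subquot ρ hA hB) σ := by
  refine ⟨(Submodule.quotEquivOfEq _ _ hk).trans (F.quotKerEquivOfSurjective hs), ?_⟩
  intro g v
  obtain ⟨v, rfl⟩ := Submodule.Quotient.mk_surjective _ v
  exact hF g v

lemma deg_eq_one {ρ : Rep K V} (c : CompSeries ρ) (σ : Rep K W) (hn : 0 < c.n)
    (h0 : GRep.Iso (GRep.subquot ρ (c.inv 0) (c.inv (0 + 1))) σ)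
    (h1 : ∀ i, ¬ GRep.Iso (GRep.subquot ρ (c.inv (i + 1)) (c.inv (i + 1 + 1))) σ) :
    c.deg σ = 1 := by
  unfold CompSeries.deg
  rw [Finset.card_eq_one]
  refine ⟨⟨0, hn⟩, Finset.ext fun i => ?_⟩
  obtain ⟨i, hi⟩ := i
  rw [Finset.mem_filter, Finset.mem_singleton]
  rcases i with _ | i
  · exact ⟨fun _ => rfl, fun _ => ⟨Finset.mem_univ _, h0⟩⟩
  · refine ⟨fun h => absurd h.2 (h1 i), fun h => ?_⟩
    exact absurd (congrArg Fin.val h) (by simp)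

lemma not_iso {ψ : AddChar K ℂ} (hψlc : IsLocallyConstant (⇑ψ)) (hψne : ψ ≠ 1)
    (hS0 : SSx K ≠ ⊥) (ρ : Rep K V) {A B : Submodule ℂ V}
    (hA : GRep.Invariant ρ A) (hB : GRep.Invariant ρ B) (hle : sCoinvKer ρ ≤ A) :
    ¬ GRep.Iso (GRep.subquot ρ hA hB) (SRep ψ hψlc) := by
  rintro ⟨e, he⟩
  have htriv : ∀ (b : K) (f : ↥(SSx K)), SRep ψ hψlc (sS b) f = f := by
    intro b f
    obtain ⟨v, rfl⟩ := e.surjective f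
    rw [← he]
    congr 1
    obtain ⟨v, rfl⟩ := Submodule.Quotient.mk_surjective _ v
    refine (Submodule.Quotient.eq _).2 ?_
    show ρ (sS b) v.1 - v.1 ∈ A
    exact hle (Submodule.subset_span ⟨b, v.1, rfl⟩)
  obtain ⟨f, hf, hf0⟩ := (Submodule.ne_bot_iff _).1 hS0
  obtain ⟨c, hc⟩ := psi_ne hψne
  apply hf0
  funext x
  have h1 : ψ (c * ((x⁻¹ : Kˣ) : K) * (x : K)) * f (x * 1) = f x :=
    congrFun (congrArg Subtype.val (htriv (c * ((x⁻¹ : Kˣ) : K)) ⟨f, hf⟩)) x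
  rw [mul_one, mul_assoc, Units.inv_mul, mul_one] at h1
  have h2 : (ψ c - 1) * f x = 0 := by rw [sub_mul, h1, one_mul, sub_self]
  exact (mul_eq_zero.1 h2).resolve_left (sub_ne_zero.2 hc)

lemma exists_chain (ρ : Rep K V) (A : Submodule ℂ V) (hA : GRep.Invariant ρ A)
    (hfin : Module.Finite ℂ (V ⧸ A)) (D : Submodule ℂ (V ⧸ A)) :
    GRep.Invariant ρ (D.comap A.mkQ) →
    ∃ (n : ℕ) (U : ℕ → Submodule ℂ V), U 0 = A ∧ (U n = D.comap A.mkQ) ∧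
      (∀ i, GRep.Invariant ρ (U i)) ∧ (∀ i, A ≤ U i) ∧ (∀ i < n, U i < U (i + 1)) ∧
      (∀ i < n, ∀ C : Submodule ℂ V, GRep.Invariant ρ C → U i ≤ C → C ≤ U (i + 1) →
        C = U i ∨ C = U (i + 1)) := by
  induction D using WellFoundedLT.induction with
  | ind D ih =>
  intro hD
  by_cases hbot : D = ⊥
  · refine ⟨0, fun _ => A, rfl, ?_, fun _ => hA, fun _ => le_rfl, ?_, ?_⟩
    · rw [hbot, Submodule.comap_bot, Submodule.ker_mkQ]
    · intro i hi; omega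
    · intro i hi; omega
  obtain ⟨D', ⟨hD'inv, hD'lt⟩, hmax⟩ := WellFounded.has_min
    (wellFounded_gt (α := Submodule ℂ (V ⧸ A)))
    {C | GRep.Invariant ρ (C.comap A.mkQ) ∧ C < D}
    ⟨⊥, by
      show GRep.Invariant ρ (Submodule.comap A.mkQ ⊥)
      rw [Submodule.comap_bot, Submodule.ker_mkQ]
      exact hA, bot_lt_iff_ne_bot.2 hbot⟩
  obtain ⟨n, U, h0, hn, hinv, hge, hlt, hmx⟩ := ih D' hD'lt hD'inv
  have hcm : ∀ C D : Submodule ℂ (V ⧸ A), C < D → C.comap A.mkQ < D.comap A.mkQ := by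
    intro C D h
    exact (Submodule.comap_strictMono_of_surjective A.mkQ_surjective) h
  refine ⟨n + 1, fun i => if i ≤ n then U i else D.comap A.mkQ, ?_, ?_, ?_, ?_, ?_, ?_⟩
  · simp [h0]
  · simp
  · intro i
    dsimp only
    split_ifs
    · exact hinv i
    · exact hD
  · intro i
    dsimp only
    split_ifs
    · exact hge i
    · exact Submodule.le_comap_mkQ _ _
  · intro i hi
    dsimp only
    rcases Nat.lt_succ_iff_lt_or_eq.1 hi with h | h
    · rw [if_pos h.le, if_pos (by omega)]
      exact hlt i h
    · subst h
      rw [if_pos le_rfl, if_neg (by omega), hn]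
      exact hcm _ _ hD'lt
  · intro i hi C hC
    dsimp only
    rcases Nat.lt_succ_iff_lt_or_eq.1 hi with h | h
    · rw [if_pos h.le, if_pos (by omega)]
      exact hmx i h C hC
    · subst h
      rw [if_pos le_rfl, if_neg (by omega), hn]
      intro h1 h2
      have hAC : A ≤ C := (Submodule.le_comap_mkQ _ _).trans h1
      have hCC : (C.map A.mkQ).comap A.mkQ = C := by
        rw [Submodule.comap_map_mkQ, sup_eq_right.2 hAC]
      by_cases hCD : C.map A.mkQ = D
      · right; rw [← hCD, hCC]
      · left
        have h3 : C.map A.mkQ ≤ D := Submodule.map_le_iff_le_comap.2 h2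
        have h4 : D' ≤ C.map A.mkQ := by
          rw [← Submodule.map_comap_eq_of_surjective A.mkQ_surjective D']
          exact Submodule.map_mono h1
        have h5 := hmax (C.map A.mkQ) ⟨by rw [hCC]; exact hC, lt_of_le_of_ne h3 hCD⟩
        have h6 : D' = C.map A.mkQ := by
          by_contra hne
          exact h5 (lt_of_le_of_ne h4 hne)
        rw [h6, hCC]

lemma sub_sCoinvKer {ψ : AddChar K ℂ} (hψlc : IsLocallyConstant (⇑ψ)) (hψne : ψ ≠ 1)
    (EY : Submodule ℂ (Kˣ → ℂ)) (hEY : GRep.Invariant (repCx K ψ) EY) (hCb : EY ≤ Cb K)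
    (hne : EY ≠ ⊥) :
    sCoinvKer (GRep.sub (repCx K ψ) hEY) = (SSx K).comap EY.subtype := by
  apply le_antisymm
  · refine Submodule.span_le.2 ?_
    rintro w ⟨b, v, rfl⟩
    exact Cb_sub_mem hψlc v.1 (hCb v.2) b
  · obtain ⟨hS, _⟩ := SSx_le hψlc hψne EY hEY hCb hne
    intro f hf
    have h1 := SSx_mem_twist hψlc hψne 0 ⟨f.1, hf⟩ (fun x hx => absurd hx x.ne_zero)
    rw [sTwistKer_zero] at h1
    exact sCoinvKer_le_comap (SRep ψ hψlc) (GRep.sub (repCx K ψ) hEY)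
      (Submodule.inclusion hS) (fun g v => rfl) h1

lemma exists_series {ψ : AddChar K ℂ} (hψlc : IsLocallyConstant (⇑ψ)) (hψne : ψ ≠ 1)
    (EY : Submodule ℂ (Kˣ → ℂ)) (hEY : GRep.Invariant (repCx K ψ) EY) (hCb : EY ≤ Cb K)
    (hne : EY ≠ ⊥)
    (hfin : Module.Finite ℂ (↥EY ⧸ sCoinvKer (GRep.sub (repCx K ψ) hEY))) :
    ∃ cY : CompSeries (GRep.sub (repCx K ψ) hEY), cY.deg (SRep ψ hψlc) = 1 := by
  have hA := sub_sCoinvKer hψlc hψne EY hEY hCb hne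
  obtain ⟨hS, hS0⟩ := SSx_le hψlc hψne EY hEY hCb hne
  set ρ := GRep.sub (repCx K ψ) hEY with hρ
  set A := sCoinvKer ρ with hAdef
  have hAinv : GRep.Invariant ρ A := sCoinvKer_invariant ρ
  have hA0 : A ≠ ⊥ := by
    obtain ⟨f, hf, hf0⟩ := (Submodule.ne_bot_iff _).1 hS0
    refine (Submodule.ne_bot_iff _).2 ⟨⟨f, hS hf⟩, ?_, fun h => hf0 (congrArg Subtype.val h)⟩
    rw [hA]; exact hf
  have hAmin : ∀ C : Submodule ℂ ↥EY, GRep.Invariant ρ C → C ≤ A → C = ⊥ ∨ C = A := by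
    intro C hC hCA
    by_cases hC0 : C = ⊥
    · exact Or.inl hC0
    right
    refine le_antisymm hCA ?_
    obtain ⟨h1, _⟩ := SSx_le hψlc hψne (C.map EY.subtype)
      (GRep.map_invariant ρ (repCx K ψ) EY.subtype (fun g v => rfl) C hC)
      ((Submodule.map_subtype_le _ _).trans hCb)
      (map_ne_bot _ EY.injective_subtype C hC0)
    intro f hf
    rw [hA] at hf
    obtain ⟨g, hg, hgf⟩ := h1 hf
    have : g = f := Subtype.ext hgf
    rw [← this]; exact hg
  obtain ⟨n, U, h0, hn, hinv, hge, hlt, hmx⟩ := exists_chain ρ A hAinv hfin ⊤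
    (by rw [Submodule.comap_top]; intro _ _ _; trivial)
  rw [Submodule.comap_top] at hn
  refine ⟨{ n := n + 1
            W := fun i => Nat.casesOn i ⊥ U
            bot := rfl
            top := hn
            inv := ?_
            lt := ?_
            maximal := ?_ }, ?_⟩
  · rintro (_ | i)
    · intro g v hv
      rw [(Submodule.mem_bot ℂ).1 hv, map_zero]
      exact Submodule.zero_mem _
    · exact hinv i
  · rintro (_ | i) hi
    · show ⊥ < U 0
      rw [h0]; exact bot_lt_iff_ne_bot.2 hA0
    · exact hlt i (by omega)
  · rintro (_ | i) hi C hC h1 h2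
    · show C = ⊥ ∨ C = U 0
      change C ≤ U 0 at h2
      rw [h0] at h2 ⊢
      exact hAmin C hC h2
    · exact hmx i (by omega) C hC h1 h2
  · refine deg_eq_one _ (SRep ψ hψlc) (Nat.succ_pos n) ?_ ?_
    · show GRep.Iso (GRep.subquot ρ (A := ⊥) (B := U 0) _ _) (SRep ψ hψlc)
      have hU : ∀ v : ↥(U 0), v.1.1 ∈ SSx K := by
        intro v
        have h1 : v.1 ∈ A := by rw [← h0]; exact v.2
        rw [hA] at h1
        exact h1
      let F : ↥(U 0) →ₗ[ℂ] ↥(SSx K) :=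
        (EY.subtype.comp (U 0).subtype).codRestrict (SSx K) hU
      have hF : Function.Surjective F := by
        intro f
        refine ⟨⟨⟨f.1, hS f.2⟩, ?_⟩, rfl⟩
        rw [h0, hA]
        exact f.2
      refine subquot_bot_iso ρ (SRep ψ hψlc) _ _ F ?_ hF (fun g v => rfl)
      ext v
      rw [LinearMap.mem_ker]
      constructor
      · intro h
        have h2 : v.1 = 0 := h
        have h3 : v = 0 := Subtype.ext h2
        rw [h3, map_zero]
      · intro h
        have h2 : v.1 = 0 := Subtype.ext (congrArg (fun z : ↥(SSx K) => z.1) h)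
        exact h2
    · intro i
      exact not_iso hψlc hψne hS0 ρ _ _ (hge i)

end Part4

theorem statement15
    (hchar : (2 : K) ≠ 0)
    (ψ : AddChar K ℂ) (hψlc : IsLocallyConstant (⇑ψ)) (hψne : ψ ≠ 1)
    {X EX P M : Type*} [AddCommGroup X] [Module ℂ X] [Module.Finite ℂ X]
    [AddCommGroup EX] [Module ℂ EX] [AddCommGroup P] [Module ℂ P]
    [AddCommGroup M] [Module ℂ M]
    (τX : Representation ℂ Kˣ X) (hτX : TIsSmooth τX) (hXcyc : TCyclic τX)
    (ρE : Rep K EX) (hρE : IsSmoothRep ρE) (cE : CompSeries ρE)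
    (hEdeg : cE.deg (SRep ψ hψlc) = 1) (hEperf : Perfect ρE)
    (hEpi0 : GRep.Iso (piZeroT ρE) τX)
    (ρP : Rep K P) (hρP : IsSmoothRep ρP) (cP : CompSeries ρP)
    (ρM : Rep K M) (hρM : IsSmoothRep ρM) (cM : CompSeries ρM)
    (i : P →ₗ[ℂ] M) (hi : GRep.Equivariant ρP ρM i) (hiinj : Function.Injective i)
    (j : EX →ₗ[ℂ] M) (hj : GRep.Equivariant ρE ρM j) (hjinj : Function.Injective j) :
    (Function.Injective ((LinearMap.range i).mkQ.comp j) ∧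
      Function.Injective ((LinearMap.range j).mkQ.comp i)) ∨
    (∃ (ψm : X →ₗ[ℂ] ↥(sInv (GRep.quot ρM (LinearMap.range i)
          (GRep.range_invariant ρP ρM i hi))))
       (hψm : GRep.Equivariant τX
          (sInvT (GRep.quot ρM (LinearMap.range i) (GRep.range_invariant ρP ρM i hi))) ψm),
      ∃ (EY : Submodule ℂ (Kˣ → ℂ)) (hEY : GRep.Invariant (repCx K ψ) EY),
        EY ≤ Cb K ∧
        (∃ cY : CompSeries (GRep.sub (repCx K ψ) hEY), cY.deg (SRep ψ hψlc) = 1) ∧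
        GRep.Iso (piZeroT (GRep.sub (repCx K ψ) hEY))
          (GRep.sub τX (GRep.ker_invariant τX
            (sInvT (GRep.quot ρM (LinearMap.range i) (GRep.range_invariant ρP ρM i hi)))
            ψm hψm)) ∧
        ∃ g : ↥EY →ₗ[ℂ] P, Function.Injective g ∧
          GRep.Equivariant (GRep.sub (repCx K ψ) hEY) ρP g) := by
  obtain ⟨e, he⟩ := hEpi0
  have hfin : Module.Finite ℂ (EX ⧸ sCoinvKer ρE) := Module.Finite.equiv e.symm
  have heT : ∀ (u : Kˣ) (v : EX), τX u (e (Submodule.Quotient.mk v))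
      = e (Submodule.Quotient.mk (ρE (xT u) v)) := by
    intro u v
    rw [← he]; rfl
  let A := sCoinvKer ρE
  obtain ⟨k, hkinj, hkeq, hkCb⟩ := exists_embedding hψlc hψne hρE hEperf hfin cE hEdeg
  have hinvB := sInv_eq_bot hψlc hψne hρE hEperf hfin
  set Ri := LinearMap.range i with hRi
  have hRinv : GRep.Invariant ρM Ri := GRep.range_invariant ρP ρM i hi
  set σ := GRep.quot ρM Ri hRinv with hσ
  set φ : EX →ₗ[ℂ] M ⧸ Ri := Ri.mkQ.comp j with hφ
  have hφeq : GRep.Equivariant ρE σ φ := by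
    intro g v
    show Ri.mkQ (j (ρE g v)) = σ g (Ri.mkQ (j v))
    rw [hj]
    exact GRep.mkQ_equivariant ρM Ri hRinv g (j v)
  set N := LinearMap.ker φ with hN
  have hNinv : GRep.Invariant ρE N := GRep.ker_invariant ρE σ φ hφeq
  have hNmem : ∀ v, v ∈ N ↔ ∃ p, i p = j v := by
    intro v
    rw [hN, LinearMap.mem_ker]
    exact Submodule.Quotient.mk_eq_zero _
  by_cases hN0 : N = ⊥
  · left
    refine ⟨LinearMap.ker_eq_bot.1 hN0, ?_⟩
    rw [← LinearMap.ker_eq_bot, eq_bot_iff]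
    intro p hp
    obtain ⟨v, hv⟩ : i p ∈ LinearMap.range j := (Submodule.Quotient.mk_eq_zero _).1 hp
    have hvN : v ∈ N := (hNmem v).2 ⟨p, hv.symm⟩
    rw [hN0, Submodule.mem_bot] at hvN
    rw [hvN, map_zero] at hv
    rw [Submodule.mem_bot]
    exact hiinj (by rw [← hv, map_zero])
  right
  set EY := N.map k with hEYdef
  have hEY : GRep.Invariant (repCx K ψ) EY := GRep.map_invariant ρE _ k hkeq N hNinv
  have hCb : EY ≤ Cb K := by
    rintro _ ⟨v, _, rfl⟩; exact hkCb v
  have hEY0 : EY ≠ ⊥ := by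
    exact map_ne_bot k hkinj N hN0
  obtain ⟨hS, hS0⟩ := SSx_le hψlc hψne EY hEY hCb hEY0
  have hkA : A ≤ (SSx K).comap k := by
    refine Submodule.span_le.2 ?_
    rintro _ ⟨b, v, rfl⟩
    rw [SetLike.mem_coe, Submodule.mem_comap, map_sub, hkeq]
    exact Cb_sub_mem hψlc _ (hkCb v) b
  have hAN : A ≤ N := by
    intro v hv
    obtain ⟨w, hw, hwv⟩ := hS (hkA hv)
    rw [← hkinj hwv]; exact hw
  have hA0 : A ≠ ⊥ := by
    intro h
    apply hN0
    rw [eq_bot_iff, ← hinvB]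
    intro v _ b
    have h1 : ρE (sS b) v - v ∈ A := Submodule.subset_span ⟨b, v, rfl⟩
    rw [h, Submodule.mem_bot] at h1
    exact sub_eq_zero.1 h1
  have hAk : ∀ v, v ∈ A ↔ k v ∈ SSx K := by
    intro v
    refine ⟨fun h => hkA h, fun h => ?_⟩
    obtain ⟨h1, _⟩ := SSx_le hψlc hψne (A.map k)
      (GRep.map_invariant ρE _ k hkeq A (sCoinvKer_invariant ρE))
      (by rintro _ ⟨v, _, rfl⟩; exact hkCb v)
      (map_ne_bot k hkinj A hA0)
    obtain ⟨w, hw, hwv⟩ := h1 h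
    rw [← hkinj hwv]; exact hw
  have hφS : ∀ x : EX ⧸ A, A.liftQ φ hAN x ∈ sInv σ := by
    intro x b
    obtain ⟨v, rfl⟩ := Submodule.Quotient.mk_surjective _ x
    show σ (sS b) (φ v) = φ v
    rw [← hφeq, ← sub_eq_zero, ← map_sub]
    exact hAN (Submodule.subset_span ⟨b, v, rfl⟩)
  set ψ0 : (EX ⧸ A) →ₗ[ℂ] ↥(sInv σ) := (A.liftQ φ hAN).codRestrict (sInv σ) hφS with hψ0
  set ψm : X →ₗ[ℂ] ↥(sInv σ) := ψ0.comp e.symm.toLinearMap with hψmdef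
  have hψmk : ∀ v : EX, (ψm (e (Submodule.Quotient.mk v))).1 = φ v := by
    intro v
    show (ψ0 (e.symm (e (Submodule.Quotient.mk v)))).1 = φ v
    rw [LinearEquiv.symm_apply_apply]
    rfl
  have hex : ∀ x : X, ∃ v : EX, x = e (Submodule.Quotient.mk v) := by
    intro x
    obtain ⟨v, hv⟩ := Submodule.Quotient.mk_surjective _ (e.symm x)
    exact ⟨v, by rw [hv, LinearEquiv.apply_symm_apply]⟩
  have hψm : GRep.Equivariant τX (sInvT σ) ψm := by
    intro u x
    obtain ⟨v, rfl⟩ := hex x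
    apply Subtype.ext
    show (ψm (τX u (e (Submodule.Quotient.mk v)))).1
      = σ (xT u) (ψm (e (Submodule.Quotient.mk v))).1
    rw [heT, hψmk, hψmk, hφeq]
  have hker : ∀ v : EX, e (Submodule.Quotient.mk v) ∈ LinearMap.ker ψm ↔ v ∈ N := by
    intro v
    rw [LinearMap.mem_ker, hN, LinearMap.mem_ker, ← hψmk]
    exact ⟨fun h => by rw [h]; rfl, fun h => Subtype.ext h⟩
  -- the inverse of k on EY
  let kN : ↥N ≃ₗ[ℂ] ↥EY := Submodule.equivMapOfInjective k hkinj N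
  have hkN : ∀ v : ↥N, (kN v).1 = k v.1 := fun v => rfl
  have hkNs : ∀ y : ↥EY, k (kN.symm y).1 = y.1 := by
    intro y
    rw [← hkN, LinearEquiv.apply_symm_apply]
  have hkNeq : ∀ (g : Aff K) (y : ↥EY),
      (kN.symm (GRep.sub (repCx K ψ) hEY g y)).1 = ρE g (kN.symm y).1 := by
    intro g y
    apply hkinj
    rw [hkNs, hkeq, hkNs]
    rfl
  let G0 : ↥N →ₗ[ℂ] X := (e.toLinearMap.comp A.mkQ).comp N.subtype
  let G : ↥EY →ₗ[ℂ] ↥(LinearMap.ker ψm) :=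
    (G0.comp kN.symm.toLinearMap).codRestrict (LinearMap.ker ψm)
      (fun y => (hker _).2 (kN.symm y).2)
  have hG : ∀ y, (G y).1 = e (Submodule.Quotient.mk (kN.symm y).1) := fun y => rfl
  have hGs : Function.Surjective G := by
    rintro ⟨x, hx⟩
    obtain ⟨v, rfl⟩ := hex x
    refine ⟨kN ⟨v, (hker v).1 hx⟩, Subtype.ext ?_⟩
    rw [hG, LinearEquiv.symm_apply_apply]
  have hGk : sCoinvKer (GRep.sub (repCx K ψ) hEY) = LinearMap.ker G := by
    rw [sub_sCoinvKer hψlc hψne EY hEY hCb hEY0]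
    ext y
    rw [Submodule.mem_comap, LinearMap.mem_ker]
    have h1 : G y = 0 ↔ (kN.symm y).1 ∈ A := by
      rw [← Submodule.Quotient.mk_eq_zero A, ← map_eq_zero_iff e e.injective, ← hG]
      exact ⟨fun h => by rw [h]; rfl, fun h => Subtype.ext h⟩
    rw [h1, hAk, hkNs]
    rfl
  let Q := (Submodule.quotEquivOfEq _ _ hGk).trans (G.quotKerEquivOfSurjective hGs)
  have hQ : ∀ y : ↥EY, Q (Submodule.Quotient.mk y) = G y := fun y => rfl
  have hfinY : Module.Finite ℂ (↥EY ⧸ sCoinvKer (GRep.sub (repCx K ψ) hEY)) :=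
    Module.Finite.equiv Q.symm
  refine ⟨ψm, hψm, EY, hEY, hCb, exists_series hψlc hψne EY hEY hCb hEY0 hfinY, ⟨Q, ?_⟩, ?_⟩
  · intro u y
    obtain ⟨y, rfl⟩ := Submodule.Quotient.mk_surjective _ y
    apply Subtype.ext
    show (Q (Submodule.Quotient.mk (GRep.sub (repCx K ψ) hEY (xT u) y))).1
      = τX u (Q (Submodule.Quotient.mk y)).1
    rw [hQ, hQ, hG, hG, hkNeq, heT]
  · have hmem : ∀ y : ↥EY, j (kN.symm y).1 ∈ LinearMap.range i := by
      intro y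
      obtain ⟨p, hp⟩ := (hNmem _).1 (kN.symm y).2
      exact ⟨p, hp⟩
    let J : ↥EY →ₗ[ℂ] ↥(LinearMap.range i) :=
      ((j.comp N.subtype).comp kN.symm.toLinearMap).codRestrict (LinearMap.range i) hmem
    let g : ↥EY →ₗ[ℂ] P := (LinearEquiv.ofInjective i hiinj).symm.toLinearMap.comp J
    have hg : ∀ y, i (g y) = j (kN.symm y).1 := by
      intro y
      have h1 := congrArg Subtype.val
        (LinearEquiv.apply_symm_apply (LinearEquiv.ofInjective i hiinj) (J y))
      exact h1
    refine ⟨g, ?_, ?_⟩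
    · intro y z hyz
      have h1 : i (g y) = i (g z) := by rw [hyz]
      rw [hg, hg] at h1
      exact kN.symm.injective (Subtype.ext (hjinj h1))
    · intro a y
      apply hiinj
      rw [hg, hi, hg, hkNeq, hj]


end Statements

end PSW
end
end

section
/- Let π be a smooth representation of GL(2,k) on a complex vector space. If a split maximal torus of GL(2,k) acts on a vector v by a character χ of the torus, then v spans a GL(2,k)-invariant line; in particular, GL(2,k) acts on v by the character μ∘det for some smooth character μ of k^×, and χ is the restriction of μ∘det to the torus. -/
noncomputable section

open scoped Classical

namespace PSW

section GL2Aux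

variable {K : Type*} [Field K]

/-- Upper unipotent element. -/
def upGL (x : K) : Matrix.GeneralLinearGroup (Fin 2) K where
  val := !![1, x; 0, 1]
  inv := !![1, -x; 0, 1]
  val_inv := by simp [Matrix.mul_fin_two, Matrix.one_fin_two]
  inv_val := by simp [Matrix.mul_fin_two, Matrix.one_fin_two]

/-- Lower unipotent element. -/
def loGL (x : K) : Matrix.GeneralLinearGroup (Fin 2) K where
  val := !![1, 0; x, 1]
  inv := !![1, 0; -x, 1]
  val_inv := by simp [Matrix.mul_fin_two, Matrix.one_fin_two]
  inv_val := by simp [Matrix.mul_fin_two, Matrix.one_fin_two]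

lemma diagGL_val (a b : Kˣ) :
    (diagGL a b : Matrix (Fin 2) (Fin 2) K) = !![(a : K), 0; 0, (b : K)] := by
  ext i j
  fin_cases i <;> fin_cases j <;> simp [diagGL]

lemma diagGL_inv (a b : Kˣ) : (diagGL a b)⁻¹ = diagGL a⁻¹ b⁻¹ := by
  rw [inv_eq_iff_mul_eq_one]
  ext1
  rw [Units.val_mul, diagGL_val, diagGL_val]
  simp [Matrix.mul_fin_two, Matrix.one_fin_two]

lemma upGL_val (x : K) : (upGL x : Matrix (Fin 2) (Fin 2) K) = !![1, x; 0, 1] := rfl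
lemma loGL_val (x : K) : (loGL x : Matrix (Fin 2) (Fin 2) K) = !![1, 0; x, 1] := rfl

lemma diag_up (a : Kˣ) (x : K) : diagGL a 1 * upGL x = upGL (a * x) * diagGL a 1 := by
  ext1
  simp only [Units.val_mul, diagGL_val, upGL_val]
  simp [Matrix.mul_fin_two]

lemma diag_lo (a : Kˣ) (x : K) : diagGL 1 a * loGL x = loGL (a * x) * diagGL 1 a := by
  ext1
  simp only [Units.val_mul, diagGL_val, loGL_val]
  simp [Matrix.mul_fin_two]

lemma diag_eq_unip (t : Kˣ) : diagGL t t⁻¹ =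
    upGL (t : K) * loGL (-(t : K)⁻¹) * upGL (t : K) * (upGL (-1) * loGL 1 * upGL (-1)) := by
  ext1
  simp only [Units.val_mul, diagGL_val, upGL_val, loGL_val]
  simp [Matrix.mul_fin_two]

lemma big_cell (g : Matrix.GeneralLinearGroup (Fin 2) K) (h : g.1 0 0 ≠ 0) :
    g = loGL (g.1 1 0 / g.1 0 0) *
      diagGL (Units.mk0 _ h) (Matrix.GeneralLinearGroup.det g * (Units.mk0 _ h)⁻¹) *
      upGL (g.1 0 1 / g.1 0 0) := by
  ext1
  simp only [Units.val_mul, diagGL_val, upGL_val, loGL_val]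
  have hd : ((Matrix.GeneralLinearGroup.det g : Kˣ) : K)
      = g.1 0 0 * g.1 1 1 - g.1 0 1 * g.1 1 0 := by
    rw [← Matrix.det_fin_two]; rfl
  conv_lhs => rw [Matrix.eta_fin_two g.1]
  simp only [Units.val_inv_eq_inv_val, Units.val_mk0, hd, Matrix.mul_fin_two]
  congr 1
  ext i j
  fin_cases i <;> fin_cases j <;> simp <;> field_simp
  ring

lemma continuous_upGL [TopologicalSpace K] [IsTopologicalRing K] :
    Continuous (upGL : K → Matrix.GeneralLinearGroup (Fin 2) K) := by
  rw [Units.continuous_iff]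
  constructor <;> refine continuous_matrix fun i j => ?_ <;>
    fin_cases i <;> fin_cases j <;> simp [upGL, Units.inv_mk] <;> fun_prop

lemma continuous_loGL [TopologicalSpace K] [IsTopologicalRing K] :
    Continuous (loGL : K → Matrix.GeneralLinearGroup (Fin 2) K) := by
  rw [Units.continuous_iff]
  constructor <;> refine continuous_matrix fun i j => ?_ <;>
    fin_cases i <;> fin_cases j <;> simp [loGL, Units.inv_mk] <;> fun_prop

lemma continuous_diagGL [TopologicalSpace K] [IsTopologicalRing K] :
    Continuous (fun a : Kˣ => (diagGL a 1 : Matrix.GeneralLinearGroup (Fin 2) K)) := by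
  rw [Units.continuous_iff]
  constructor
  · refine continuous_matrix fun i j => ?_
    simp only [Function.comp_apply, diagGL_val]
    fin_cases i <;> fin_cases j <;> simp
    all_goals first | exact continuous_const | exact Units.continuous_val
  · simp only [diagGL_inv, diagGL_val]
    refine continuous_matrix fun i j => ?_
    fin_cases i <;> fin_cases j <;> simp [-Units.val_inv_eq_inv_val]
    all_goals first | exact continuous_const | exact Units.continuous_val.comp continuous_inv

end GL2Aux

lemma gl2_diag_case {K : Type*} [NontriviallyNormedField K]
    {V : Type*} [AddCommGroup V] [Module ℂ V]
    (ρ : Representation ℂ (Matrix.GeneralLinearGroup (Fin 2) K) V)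
    (hρ : ∀ w : V, IsOpen {g : Matrix.GeneralLinearGroup (Fin 2) K | ρ g w = w})
    (w : V) (hw : w ≠ 0) (χ : Kˣ × Kˣ →* ℂˣ)
    (hχ : ∀ a b : Kˣ, ρ (diagGL a b) w = (χ (a, b) : ℂ) • w) :
    ∃ μ : Kˣ →* ℂˣ, SmoothMulChar μ ∧
      (∀ g : Matrix.GeneralLinearGroup (Fin 2) K,
        ρ g w = ((μ (Matrix.GeneralLinearGroup.det g) : ℂˣ) : ℂ) • w) ∧
      ∀ a b : Kˣ, (χ (a, b) : ℂ) = ((μ (a * b) : ℂˣ) : ℂ) := by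
  have small : ∀ f : K → Matrix.GeneralLinearGroup (Fin 2) K, Continuous f → f 0 = 1 →
      ∃ x : K, x ≠ 0 ∧ ρ (f x) w = w := by
    intro f hf h0
    have ho : {x : K | ρ (f x) w = w} ∈ nhds (0 : K) :=
      ((hρ w).preimage hf).mem_nhds (by simp [h0])
    obtain ⟨x, hx1, hx2⟩ := ((nhdsWithin_le_nhds ho : _ ∈ nhdsWithin (0 : K) {0}ᶜ) |>
      fun h => Filter.nonempty_of_mem (Filter.inter_mem h self_mem_nhdsWithin))
    exact ⟨x, hx2, hx1⟩
  have up0 : upGL (0 : K) = 1 := by ext1; simp [upGL_val, Matrix.one_fin_two]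
  have lo0 : loGL (0 : K) = 1 := by ext1; simp [loGL_val, Matrix.one_fin_two]
  have mulap : ∀ g h : Matrix.GeneralLinearGroup (Fin 2) K, ρ (g * h) w = ρ g (ρ h w) := by
    intro g h; rw [map_mul, Module.End.mul_apply]
  have cancel : ∀ (c : ℂˣ) (x y : V), (c : ℂ) • x = (c : ℂ) • y → x = y := by
    intro c x y h
    exact (smul_right_injective V c.ne_zero) h
  have hup : ∀ y : K, ρ (upGL y) w = w := by
    obtain ⟨x, hx, hxw⟩ := small upGL continuous_upGL up0
    intro y
    rcases eq_or_ne y 0 with rfl | hy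
    · simp [up0]
    · have h := congrArg (fun g => ρ g w) (diag_up (Units.mk0 (y / x) (div_ne_zero hy hx)) x)
      simp only [mulap, hxw, hχ, map_smul, Units.val_mk0, div_mul_cancel₀ y hx] at h
      exact (cancel _ _ _ h).symm
  have hlo : ∀ y : K, ρ (loGL y) w = w := by
    obtain ⟨x, hx, hxw⟩ := small loGL continuous_loGL lo0
    intro y
    rcases eq_or_ne y 0 with rfl | hy
    · simp [lo0]
    · have h := congrArg (fun g => ρ g w) (diag_lo (Units.mk0 (y / x) (div_ne_zero hy hx)) x)
      simp only [mulap, hxw, hχ, map_smul, Units.val_mk0, div_mul_cancel₀ y hx] at h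
      exact (cancel _ _ _ h).symm
  have scal : ∀ c d : ℂˣ, (c : ℂ) • w = (d : ℂ) • w → c = d := by
    intro c d h
    exact Units.ext (smul_left_injective ℂ hw h)
  have hanti : ∀ t : Kˣ, χ (t, t⁻¹) = 1 := by
    intro t
    apply scal
    rw [← hχ, diag_eq_unip]
    simp only [mulap, hup, hlo, Units.val_one, one_smul]
  have hab : ∀ a b : Kˣ, χ (a, b) = χ (a * b, 1) := by
    intro a b
    have h : ((a, b) : Kˣ × Kˣ) = (a * b, 1) * (b⁻¹, b⁻¹⁻¹) := by simp
    rw [h, map_mul, hanti, mul_one]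
  have key : ∀ g : Matrix.GeneralLinearGroup (Fin 2) K, g.1 0 0 ≠ 0 →
      ρ g w = (χ (Matrix.GeneralLinearGroup.det g, 1) : ℂ) • w := by
    intro g h
    conv_lhs => rw [big_cell g h]
    simp only [mulap, hup, hχ, map_smul, hlo]
    rw [hab, mul_comm (Matrix.GeneralLinearGroup.det g), mul_inv_cancel_left]
  refine ⟨χ.comp (MonoidHom.inl Kˣ Kˣ), ?_, ?_, ?_⟩
  · have h := (hρ w).preimage continuous_diagGL
    show IsOpen {u : Kˣ | χ.comp (MonoidHom.inl Kˣ Kˣ) u = 1}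
    convert h using 1
    ext a
    simp only [MonoidHom.comp_apply, MonoidHom.inl_apply, Set.mem_setOf_eq, Set.mem_preimage, hχ]
    constructor
    · intro h; rw [h]; simp
    · intro h; apply scal; rw [h]; simp
  · intro g
    simp only [MonoidHom.comp_apply, MonoidHom.inl_apply]
    by_cases h : g.1 0 0 = 0
    · have hd : ((Matrix.GeneralLinearGroup.det g : Kˣ) : K)
          = g.1 0 0 * g.1 1 1 - g.1 0 1 * g.1 1 0 := by
        rw [← Matrix.det_fin_two]; rfl
      have hc : g.1 1 0 ≠ 0 := by
        intro hc
        rw [h, hc] at hd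
        exact (Matrix.GeneralLinearGroup.det g).ne_zero (by rw [hd]; simp)
      have h1 := key (upGL 1 * g) (by
        rw [Units.val_mul, upGL_val, Matrix.mul_apply]
        simp [Fin.sum_univ_two, h, hc])
      have hdu : Matrix.GeneralLinearGroup.det (upGL (1 : K)) = 1 := by
        ext1
        show Matrix.det (!![1, 1; 0, 1] : Matrix (Fin 2) (Fin 2) K) = 1
        simp [Matrix.det_fin_two]
      rw [map_mul Matrix.GeneralLinearGroup.det, hdu, one_mul] at h1
      have h2 : g = (upGL 1)⁻¹ * (upGL 1 * g) := by group
      have h3 : ρ (upGL (1 : K))⁻¹ w = w := by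
        conv_lhs => rw [← hup 1, ← mulap]
        simp
      conv_lhs => rw [h2]
      rw [mulap, h1, map_smul, h3]
    · exact key g h
  · intro a b
    rw [hab]
    rfl

section Statements

open Aff

variable {K : Type*} [NontriviallyNormedField K] [IsUltrametricDist K] [ProperSpace K]

theorem statement17
    (hchar : (2 : K) ≠ 0)
    {V : Type*} [AddCommGroup V] [Module ℂ V]
    (ρ : Representation ℂ (Matrix.GeneralLinearGroup (Fin 2) K) V)
    (hρ : ∀ w : V, IsOpen {g : Matrix.GeneralLinearGroup (Fin 2) K | ρ g w = w})
    (v : V) (hv : v ≠ 0)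
    (g₀ : Matrix.GeneralLinearGroup (Fin 2) K) (χ : Kˣ × Kˣ →* ℂˣ)
    (hχv : ∀ a b : Kˣ, ρ (g₀ * diagGL a b * g₀⁻¹) v = (χ (a, b) : ℂ) • v) :
    (∀ g : Matrix.GeneralLinearGroup (Fin 2) K, ρ g v ∈ Submodule.span ℂ {v}) ∧
    ∃ μ : Kˣ →* ℂˣ, SmoothMulChar μ ∧
      (∀ g : Matrix.GeneralLinearGroup (Fin 2) K,
        ρ g v = ((μ (Matrix.GeneralLinearGroup.det g) : ℂˣ) : ℂ) • v) ∧
      ∀ a b : Kˣ, (χ (a, b) : ℂ) = ((μ (a * b) : ℂˣ) : ℂ) := by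
  have hm : ∀ (g h : Matrix.GeneralLinearGroup (Fin 2) K) (x : V),
      ρ (g * h) x = ρ g (ρ h x) := by
    intro g h x; rw [map_mul, Module.End.mul_apply]
  have hgi : ρ g₀ (ρ g₀⁻¹ v) = v := by rw [← hm]; simp
  have hw : ρ g₀⁻¹ v ≠ 0 := by
    intro h
    rw [h, map_zero] at hgi
    exact hv hgi.symm
  obtain ⟨μ, h1, h2, h3⟩ := gl2_diag_case ρ hρ (ρ g₀⁻¹ v) hw χ (by
    intro a b
    rw [← map_smul, ← hχv, ← hm, ← hm]
    congr 2
    group)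
  have h4 : ∀ g : Matrix.GeneralLinearGroup (Fin 2) K,
        ρ g v = ((μ (Matrix.GeneralLinearGroup.det g) : ℂˣ) : ℂ) • v := by
    intro g
    have h := congrArg (ρ g₀) (h2 (g₀⁻¹ * g * g₀))
    rw [map_smul, hgi, ← hm, ← hm] at h
    have e : g₀ * (g₀⁻¹ * g * g₀ * g₀⁻¹) = g := by group
    have e2 : Matrix.GeneralLinearGroup.det (g₀⁻¹ * g * g₀) = Matrix.GeneralLinearGroup.det g := by
      rw [map_mul, map_mul, map_inv, mul_comm, mul_inv_cancel_left]
    first | rw [e, e2] at h | rw [← mul_assoc, mul_assoc g₀, e, e2] at h | rw [mul_assoc g₀, e, e2] at h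
    exact h
  refine ⟨fun g => ?_, μ, h1, h4, h3⟩
  rw [h4 g]
  exact Submodule.smul_mem _ _ (Submodule.mem_span_singleton_self v)

end Statements

end PSW
end
end
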